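/- arXiv:1403.0446 — 7 statements merged into one kernel-verified Lean document; each statement's English description precedes it below -/
import Mathlib

section
/- Let z₁, z₂, z₃ be nonzero complex numbers and n₁, n₂, n₃ ≥ 1 integers. For j = 1, 2, 3 set A_j = ℂ[t^{±1}]/((t − z_j)^{n_j}). Then the quotient vector space (A₁ ⊗_ℂ A₂ ⊗_ℂ A₃)/H is nonzero if and only if z₁z₂z₃ = 1. -/
open LaurentPolynomial TensorProduct

set_option synthInstance.maxHeartbeats 1000000
set_option maxHeartbeats 1000000
noncomputable section

abbrev LQuot (K : Type) [Field K] (p : LaurentPolynomial K) : Type :=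
  LaurentPolynomial K ⧸ Ideal.span {p}

abbrev Trip (K : Type) [Field K] (p q r : LaurentPolynomial K) : Type :=
  (LQuot K p ⊗[K] LQuot K q) ⊗[K] LQuot K r

def holSub (K : Type) [Field K] (p q r : LaurentPolynomial K) :
    Submodule K (Trip K p q r) :=
  Submodule.span K { x | ∃ (a : LQuot K p) (b : LQuot K q) (c : LQuot K r),
    x = (a ⊗ₜ[K] b) ⊗ₜ[K] c -
      (((T 1 : LaurentPolynomial K) • a) ⊗ₜ[K] ((T 1 : LaurentPolynomial K) • b)) ⊗ₜ[K]
        ((T 1 : LaurentPolynomial K) • c) }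

instance (K : Type) [Field K] (p q r : LaurentPolynomial K) : AddCommGroup (Trip K p q r) :=
  TensorProduct.addCommGroup

theorem aux_unit {A : Type*} [CommRing A] [Algebra ℂ A] (a b c : A) (z₁ z₂ z₃ : ℂ)
    (ha : IsNilpotent (a - algebraMap ℂ A z₁)) (hb : IsNilpotent (b - algebraMap ℂ A z₂))
    (hc : IsNilpotent (c - algebraMap ℂ A z₃)) (hz : z₁ * z₂ * z₃ ≠ 1) :
    IsUnit (1 - a * b * c) := by
  have h1 : IsNilpotent (algebraMap ℂ A (z₁ * z₂ * z₃) - a * b * c) := by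
    rw [← mem_nilradical] at *
    have : algebraMap ℂ A (z₁ * z₂ * z₃) - a * b * c =
        -(b * c * (a - algebraMap ℂ A z₁) + algebraMap ℂ A z₁ * c * (b - algebraMap ℂ A z₂)
          + algebraMap ℂ A z₁ * algebraMap ℂ A z₂ * (c - algebraMap ℂ A z₃)) := by
      simp only [map_mul]; ring
    rw [this]
    exact neg_mem (add_mem (add_mem (Ideal.mul_mem_left _ _ ha) (Ideal.mul_mem_left _ _ hb))
      (Ideal.mul_mem_left _ _ hc))
  have h2 : IsUnit (algebraMap ℂ A (1 - z₁ * z₂ * z₃)) :=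
    (IsUnit.mk0 _ (sub_ne_zero.2 (Ne.symm hz))).map _
  have h3 := h1.isUnit_add_left_of_commute h2 (Commute.all _ _)
  have h4 : algebraMap ℂ A (1 - z₁ * z₂ * z₃) + (algebraMap ℂ A (z₁ * z₂ * z₃) - a * b * c)
      = 1 - a * b * c := by
    rw [map_sub, map_one]; ring
  rwa [h4] at h3

theorem aux_top {A B D : Type*} [CommRing A] [CommRing B] [CommRing D] [Algebra ℂ A]
    [Algebra ℂ B] [Algebra ℂ D] (a : A) (b : B) (c : D) (z₁ z₂ z₃ : ℂ)
    (ha : IsNilpotent (a - algebraMap ℂ A z₁)) (hb : IsNilpotent (b - algebraMap ℂ B z₂))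
    (hc : IsNilpotent (c - algebraMap ℂ D z₃)) (hz : z₁ * z₂ * z₃ ≠ 1)
    (H : Submodule ℂ ((A ⊗[ℂ] B) ⊗[ℂ] D))
    (hH : ∀ x y w, (x ⊗ₜ[ℂ] y) ⊗ₜ[ℂ] w - ((a * x) ⊗ₜ[ℂ] (b * y)) ⊗ₜ[ℂ] (c * w) ∈ H) :
    H = ⊤ := by
  let f : A →ₐ[ℂ] (A ⊗[ℂ] B) ⊗[ℂ] D :=
    (Algebra.TensorProduct.includeLeft (R := ℂ) (S := ℂ) (A := A ⊗[ℂ] B) (B := D)).comp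
      Algebra.TensorProduct.includeLeft
  let g : B →ₐ[ℂ] (A ⊗[ℂ] B) ⊗[ℂ] D :=
    (Algebra.TensorProduct.includeLeft (R := ℂ) (S := ℂ) (A := A ⊗[ℂ] B) (B := D)).comp
      Algebra.TensorProduct.includeRight
  let k : D →ₐ[ℂ] (A ⊗[ℂ] B) ⊗[ℂ] D := Algebra.TensorProduct.includeRight
  have hu := aux_unit (f a) (g b) (k c) z₁ z₂ z₃
    (by simpa only [map_sub, AlgHom.commutes] using ha.map f)
    (by simpa only [map_sub, AlgHom.commutes] using hb.map g)
    (by simpa only [map_sub, AlgHom.commutes] using hc.map k) hz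
  have hab : f a * g b * k c = (a ⊗ₜ[ℂ] b) ⊗ₜ[ℂ] c := by
    simp [f, g, k, Algebra.TensorProduct.tmul_mul_tmul]
  rw [hab] at hu
  have key : ∀ y, (1 - (a ⊗ₜ[ℂ] b) ⊗ₜ[ℂ] c) * y ∈ H := by
    intro y
    induction y using TensorProduct.induction_on with
    | zero => rw [mul_zero]; exact H.zero_mem
    | add x y hx hy => rw [mul_add]; exact H.add_mem hx hy
    | tmul x w =>
      induction x using TensorProduct.induction_on with
      | zero => rw [TensorProduct.zero_tmul, mul_zero]; exact H.zero_mem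
      | add x y hx hy => rw [TensorProduct.add_tmul, mul_add]; exact H.add_mem hx hy
      | tmul x y =>
        have := hH x y w
        rwa [sub_mul, one_mul, Algebra.TensorProduct.tmul_mul_tmul,
          Algebra.TensorProduct.tmul_mul_tmul]
  rw [eq_top_iff]
  intro x _
  obtain ⟨v, hv⟩ := hu.exists_right_inv
  have := key (v * x)
  rwa [← mul_assoc, hv, one_mul] at this

theorem aux_ne {A B D : Type*} [CommRing A] [CommRing B] [CommRing D] [Algebra ℂ A]
    [Algebra ℂ B] [Algebra ℂ D] (a : A) (b : B) (c : D) 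
    (f : A →ₐ[ℂ] ℂ) (g : B →ₐ[ℂ] ℂ) (k : D →ₐ[ℂ] ℂ) (hz : f a * g b * k c = 1)
    (S : Set ((A ⊗[ℂ] B) ⊗[ℂ] D))
    (hS : ∀ s ∈ S, ∃ x y w,
      s = (x ⊗ₜ[ℂ] y) ⊗ₜ[ℂ] w - ((a * x) ⊗ₜ[ℂ] (b * y)) ⊗ₜ[ℂ] (c * w)) :
    Submodule.span ℂ S ≠ ⊤ := by
  let F : (A ⊗[ℂ] B) ⊗[ℂ] D →ₐ[ℂ] ℂ :=
    Algebra.TensorProduct.lift (Algebra.TensorProduct.lift f g (fun _ _ => Commute.all _ _)) k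
      (fun _ _ => Commute.all _ _)
  intro h
  have hle : Submodule.span ℂ S ≤ LinearMap.ker F.toLinearMap := by
    rw [Submodule.span_le]
    intro s hs
    obtain ⟨x, y, w, rfl⟩ := hS s hs
    simp only [SetLike.mem_coe, LinearMap.mem_ker, AlgHom.toLinearMap_apply, map_sub, F,
      Algebra.TensorProduct.lift_tmul, map_mul]
    linear_combination -(f x * g y * k w) * hz
  have h1 : (1 : (A ⊗[ℂ] B) ⊗[ℂ] D) ∈ Submodule.span ℂ S := h ▸ Submodule.mem_top
  have h2 := hle h1
  rw [LinearMap.mem_ker, AlgHom.toLinearMap_apply, map_one] at h2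
  exact one_ne_zero h2

theorem aux_nil (z : ℂ) (n : ℕ) :
    IsNilpotent (Ideal.Quotient.mk (Ideal.span {(T 1 - C z : LaurentPolynomial ℂ) ^ n}) (T 1) -
      algebraMap ℂ (LQuot ℂ ((T 1 - C z) ^ n)) z) := by
  refine ⟨n, ?_⟩
  have : algebraMap ℂ (LQuot ℂ ((T 1 - C z) ^ n)) z = Ideal.Quotient.mk _ (C z) := rfl
  rw [this, ← map_sub, ← map_pow, Ideal.Quotient.eq_zero_iff_mem]
  exact Ideal.subset_span rfl

theorem aux_eval (z : ℂ) (hz : z ≠ 0) (n : ℕ) (hn : 1 ≤ n) :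
    ∃ f : LQuot ℂ ((T 1 - C z) ^ n) →ₐ[ℂ] ℂ, f (Ideal.Quotient.mk _ (T 1)) = z := by
  let e : LaurentPolynomial ℂ →ₐ[ℂ] ℂ :=
    { LaurentPolynomial.eval₂ (RingHom.id ℂ) (Units.mk0 z hz) with
      commutes' := fun r => by
        change LaurentPolynomial.eval₂ (RingHom.id ℂ) (Units.mk0 z hz) (C r) = r
        simp }
  have he : e (T 1) = z := by
    change LaurentPolynomial.eval₂ (RingHom.id ℂ) (Units.mk0 z hz) (T 1) = z
    simp
  have hc : e (C z) = z := e.commutes z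
  refine ⟨Ideal.Quotient.liftₐ _ e ?_, he⟩
  intro a ha
  obtain ⟨b, rfl⟩ := Ideal.mem_span_singleton.1 ha
  rw [map_mul, map_pow, map_sub, he, hc, sub_self, zero_pow (by omega), zero_mul]

theorem stmt0 (z₁ z₂ z₃ : ℂ) (hz₁ : z₁ ≠ 0) (hz₂ : z₂ ≠ 0) (hz₃ : z₃ ≠ 0)
    (n₁ n₂ n₃ : ℕ) (hn₁ : 1 ≤ n₁) (hn₂ : 1 ≤ n₂) (hn₃ : 1 ≤ n₃) :
    Nontrivial (Trip ℂ ((T 1 - C z₁) ^ n₁) ((T 1 - C z₂) ^ n₂) ((T 1 - C z₃) ^ n₃) ⧸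
        holSub ℂ ((T 1 - C z₁) ^ n₁) ((T 1 - C z₂) ^ n₂) ((T 1 - C z₃) ^ n₃)) ↔
      z₁ * z₂ * z₃ = 1 := by
  rw [Submodule.Quotient.nontrivial_iff]
  constructor
  · intro h
    by_contra hz
    refine h (aux_top (Ideal.Quotient.mk _ (T 1)) (Ideal.Quotient.mk _ (T 1))
      (Ideal.Quotient.mk _ (T 1)) z₁ z₂ z₃ (aux_nil z₁ n₁) (aux_nil z₂ n₂) (aux_nil z₃ n₃) hz _ ?_)
    intro x y w
    exact Submodule.subset_span ⟨x, y, w, rfl⟩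
  · intro hz
    obtain ⟨f, hf⟩ := aux_eval z₁ hz₁ n₁ hn₁
    obtain ⟨g, hg⟩ := aux_eval z₂ hz₂ n₂ hn₂
    obtain ⟨k, hk⟩ := aux_eval z₃ hz₃ n₃ hn₃
    refine aux_ne (Ideal.Quotient.mk _ (T 1)) (Ideal.Quotient.mk _ (T 1))
      (Ideal.Quotient.mk _ (T 1)) f g k (by rw [hf, hg, hk, hz]) _ ?_
    rintro s ⟨x, y, w, rfl⟩
    exact ⟨x, y, w, rfl⟩
end
end

section
/- Let 𝔄 be a finitely generated module over ℚ[t^{±1}] and let δ ∈ ℚ[t] with δ ≠ 0 and δ(0) ≠ 0 be such that the annihilator of 𝔄 in ℚ[t^{±1}] is the ideal generated by δ. Then 𝔄_h is nonzero if and only if there exist complex roots z₁, z₂, z₃ of δ (not necessarily distinct) such that z₁z₂z₃ = 1. -/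
open LaurentPolynomial TensorProduct

set_option synthInstance.maxHeartbeats 1000000
set_option maxHeartbeats 1000000
noncomputable section

/-- The holonomy subspace of `M ⊗ M ⊗ M`: the `K`-span of the elements
`β₁ ⊗ β₂ ⊗ β₃ - tβ₁ ⊗ tβ₂ ⊗ tβ₃`, for a module `M` over the Laurent polynomial
ring `K[t,t⁻¹]`. -/
def holSubM (K : Type) [Field K] (M : Type) [AddCommGroup M]
    [Module (LaurentPolynomial K) M] [Module K M]
    [IsScalarTower K (LaurentPolynomial K) M] :
    Submodule K ((M ⊗[K] M) ⊗[K] M) :=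
  Submodule.span K { x | ∃ a b c : M,
    x = (a ⊗ₜ[K] b) ⊗ₜ[K] c -
      (((T 1 : LaurentPolynomial K) • a) ⊗ₜ[K] ((T 1 : LaurentPolynomial K) • b)) ⊗ₜ[K]
        ((T 1 : LaurentPolynomial K) • c) }

lemma aux_field (F : Type) [Field F] [Algebra ℚ F] (δ : Polynomial ℚ) (hδ : δ ≠ 0) (x y w : F)
    (hx : Polynomial.aeval x δ = 0) (hy : Polynomial.aeval y δ = 0)
    (hw : Polynomial.aeval w δ = 0) (hu : x * y * w = 1) :
    ∃ z₁ z₂ z₃ : ℂ, Polynomial.aeval z₁ δ = 0 ∧ Polynomial.aeval z₂ δ = 0 ∧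
        Polynomial.aeval z₃ δ = 0 ∧ z₁ * z₂ * z₃ = 1 := by
  have alg : ∀ s : F, Polynomial.aeval s δ = 0 → s ∈ integralClosure ℚ F := by
    intro s hs
    have : IsAlgebraic ℚ s := ⟨δ, hδ, hs⟩
    exact this.isIntegral
  let ψ : integralClosure ℚ F →ₐ[ℚ] ℂ := IsAlgClosed.lift
  have key2 : ∀ (s : F) (hs : Polynomial.aeval s δ = 0),
      Polynomial.aeval (ψ ⟨s, alg s hs⟩) δ = 0 := by
    intro s hs
    rw [Polynomial.aeval_algHom_apply]
    have : Polynomial.aeval (⟨s, alg s hs⟩ : integralClosure ℚ F) δ = 0 := by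
      apply Subtype.val_injective
      have h := Polynomial.aeval_algHom_apply (integralClosure ℚ F).val
        (⟨s, alg s hs⟩ : integralClosure ℚ F) δ
      exact h.symm.trans hs
    rw [this, map_zero]
  refine ⟨_, _, _, key2 x hx, key2 y hy, key2 w hw, ?_⟩
  rw [← map_mul, ← map_mul, ← map_one ψ]
  congr 1
  apply Subtype.ext
  exact hu

lemma aux_roots (S : Type) [CommRing S] [Algebra ℚ S] (δ : Polynomial ℚ) (hδ : δ ≠ 0) (x y w : S)
    (hx : Polynomial.aeval x δ = 0) (hy : Polynomial.aeval y δ = 0)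
    (hw : Polynomial.aeval w δ = 0) (hu : ¬ IsUnit (x * y * w - 1)) :
    ∃ z₁ z₂ z₃ : ℂ, Polynomial.aeval z₁ δ = 0 ∧ Polynomial.aeval z₂ δ = 0 ∧
        Polynomial.aeval z₃ δ = 0 ∧ z₁ * z₂ * z₃ = 1 := by
  obtain ⟨n, hn, hmem⟩ := exists_max_ideal_of_mem_nonunits hu
  let π : S →ₐ[ℚ] (S ⧸ n) := Ideal.Quotient.mkₐ ℚ n
  have key : ∀ s : S, Polynomial.aeval s δ = 0 → Polynomial.aeval (π s) δ = 0 := by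
    intro s hs
    rw [Polynomial.aeval_algHom_apply, hs, map_zero]
  refine @aux_field (S ⧸ n) (Ideal.Quotient.field n) (Ideal.Quotient.algebra ℚ) δ hδ
    (π x) (π y) (π w) (key x hx) (key y hy) (key w hw) ?_
  change π x * π y * π w = 1
  rw [← map_mul, ← map_mul, ← map_one π]
  exact (Ideal.Quotient.eq).2 hmem

open scoped IsMulCommutative in
lemma aux_noncomm (E : Type) [Ring E] [Algebra ℚ E] (δ : Polynomial ℚ) (hδ : δ ≠ 0) (x y w : E)
    (hx : Polynomial.aeval x δ = 0) (hy : Polynomial.aeval y δ = 0)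
    (hw : Polynomial.aeval w δ = 0) (hxy : x * y = y * x) (hxw : x * w = w * x)
    (hyw : y * w = w * y) (hu : ¬ ∃ u, (x * y * w - 1) * u = 1) :
    ∃ z₁ z₂ z₃ : ℂ, Polynomial.aeval z₁ δ = 0 ∧ Polynomial.aeval z₂ δ = 0 ∧
        Polynomial.aeval z₃ δ = 0 ∧ z₁ * z₂ * z₃ = 1 := by
  let s : Set E := {x, y, w}
  have hcomm : ∀ x ∈ s, ∀ y ∈ s, x * y = y * x := by
    rintro a (rfl | rfl | rfl) b (rfl | rfl | rfl) <;>
      first | rfl | assumption | (symm; assumption)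
  have := Algebra.isMulCommutative_adjoin ℚ hcomm
  let S := Algebra.adjoin ℚ s
  have hS : ∀ u : S, Polynomial.aeval (u : E) δ = 0 → Polynomial.aeval u δ = 0 := by
    intro u hu
    apply Subtype.val_injective
    exact (Polynomial.aeval_algHom_apply S.val u δ).symm.trans hu
  refine aux_roots (Algebra.adjoin ℚ s) δ hδ ⟨x, Algebra.subset_adjoin (by simp [s])⟩
    ⟨y, Algebra.subset_adjoin (by simp [s])⟩ ⟨w, Algebra.subset_adjoin (by simp [s])⟩
    (hS _ hx) (hS _ hy) (hS _ hw) ?_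
  intro h
  obtain ⟨u, h⟩ := h.exists_right_inv
  exact hu ⟨u, congrArg Subtype.val h⟩

lemma aux_toLaurent (δ : Polynomial ℚ) :
    Polynomial.aeval (T 1 : LaurentPolynomial ℚ) δ = Polynomial.toLaurent δ := by
  have h : (Polynomial.aeval (T 1 : LaurentPolynomial ℚ)) = Polynomial.toLaurentAlg := by
    ext1
    simp
  rw [h]; rfl

lemma aux_functional (𝔄 : Type) [AddCommGroup 𝔄] [Module (LaurentPolynomial ℚ) 𝔄] [Module ℚ 𝔄]
    [IsScalarTower ℚ (LaurentPolynomial ℚ) 𝔄] [Module.Finite (LaurentPolynomial ℚ) 𝔄]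
    (δ : Polynomial ℚ) (hδ : δ ≠ 0) (hδ0 : δ.eval 0 ≠ 0)
    (hann : Module.annihilator (LaurentPolynomial ℚ) 𝔄 =
      Ideal.span {Polynomial.toLaurent δ}) (z : ℂ) (hz : Polynomial.aeval z δ = 0) :
    ∃ (f : 𝔄 →ₗ[ℚ] ℂ) (v : 𝔄), f v ≠ 0 ∧
      ∀ a, f ((T 1 : LaurentPolynomial ℚ) • a) = z * f a := by
  have hz0 : z ≠ 0 := by
    rintro rfl
    apply hδ0
    have : ((δ.eval 0 : ℚ) : ℂ) = 0 := by
      rw [← hz, ← eq_ratCast (algebraMap ℚ ℂ), ← Polynomial.aeval_algebraMap_apply_eq_algebraMap_eval,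
        map_zero]
    exact_mod_cast this
  let φ : LaurentPolynomial ℚ →ₐ[ℚ] ℂ :=
    { LaurentPolynomial.eval₂ (algebraMap ℚ ℂ) (Units.mk0 z hz0) with
      commutes' := fun r => LaurentPolynomial.eval₂_C _ _ r }
  have hφT : ∀ n : ℤ, φ (T n) = z ^ n := by
    intro n
    have := LaurentPolynomial.eval₂_T (algebraMap ℚ ℂ) (Units.mk0 z hz0) n
    refine this.trans ?_
    rw [Units.val_zpow_eq_zpow_val, Units.val_mk0]
  have hφδ : φ (Polynomial.toLaurent δ) = 0 := by
    rw [← aux_toLaurent, ← Polynomial.aeval_algHom_apply, hφT, zpow_one, hz]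
  have hzi : IsAlgebraic ℚ z := ⟨δ, hδ, hz⟩
  have hint : ∀ p, IsIntegral ℚ (φ p) := by
    intro p
    induction p using LaurentPolynomial.induction_on' with
    | add p q hp hq => rw [map_add]; exact hp.add hq
    | C_mul_T n a =>
      rw [map_mul, hφT]
      refine IsIntegral.mul ?_ ?_
      · exact (isIntegral_algebraMap (x := a)).map φ
      · obtain ⟨n, rfl | rfl⟩ := n.eq_nat_or_neg
        · rw [zpow_natCast]; exact hzi.isIntegral.pow n
        · rw [zpow_neg, zpow_natCast]; exact (hzi.pow n).inv.isIntegral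
  let m := RingHom.ker φ
  have hm : m.IsPrime := RingHom.ker_isPrime φ
  let κ : (LaurentPolynomial ℚ ⧸ m) →ₐ[ℚ] ℂ := Ideal.kerLiftAlg φ
  have hκ : Function.Injective κ := Ideal.kerLiftAlg_injective φ
  have : Algebra.IsIntegral ℚ (LaurentPolynomial ℚ ⧸ m) := by
    constructor
    intro x
    rw [← isIntegral_algHom_iff κ hκ]
    obtain ⟨p, rfl⟩ := Ideal.Quotient.mk_surjective x
    exact hint p
  have hmax : m.IsMaximal := Ideal.Quotient.maximal_of_isField m
    (isField_of_isIntegral_of_isField' (Field.toIsField ℚ))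
  let : Field (LaurentPolynomial ℚ ⧸ m) := Ideal.Quotient.field m
  have hne : ¬ ((⊤ : Submodule (LaurentPolynomial ℚ) 𝔄) ≤ m • ⊤) := by
    intro h
    obtain ⟨r, hr, hr0⟩ := Submodule.exists_sub_one_mem_and_smul_eq_zero_of_fg_of_le_smul m ⊤
      Module.Finite.fg_top h
    have h1 : r ∈ Module.annihilator (LaurentPolynomial ℚ) 𝔄 :=
      Module.mem_annihilator.2 fun a => hr0 a trivial
    rw [hann] at h1
    have h2 : r ∈ m := (Ideal.span_singleton_le_iff_mem m).2 hφδ h1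
    apply hmax.ne_top
    rw [Ideal.eq_top_iff_one]
    have := m.sub_mem h2 hr
    simpa using this
  obtain ⟨v, -, hv⟩ := SetLike.not_le_iff_exists.1 hne
  let Q := 𝔄 ⧸ (m • ⊤ : Submodule (LaurentPolynomial ℚ) 𝔄)
  have hvQ : (Submodule.Quotient.mk v : Q) ≠ 0 := by
    rwa [Ne, Submodule.Quotient.mk_eq_zero]
  obtain ⟨g, hg⟩ : ∃ g : Module.Dual (LaurentPolynomial ℚ ⧸ m) Q, g (Submodule.Quotient.mk v) ≠ 0 := by
    by_contra! h
    exact hvQ ((Module.forall_dual_apply_eq_zero_iff _ _).1 h)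
  let f₀ : 𝔄 →+ ℂ := (κ : (LaurentPolynomial ℚ ⧸ m) →+ ℂ).comp
    (g.toAddMonoidHom.comp (Submodule.mkQ (m • ⊤ : Submodule (LaurentPolynomial ℚ) 𝔄)).toAddMonoidHom)
  have hf₀ : ∀ a, f₀ a = κ (g (Submodule.Quotient.mk a)) := fun a => rfl
  refine ⟨f₀.toRatLinearMap, v, ?_, ?_⟩
  · change f₀ v ≠ 0
    rw [hf₀]
    exact fun h => hg (hκ (h.trans (map_zero κ).symm))
  · intro a
    change f₀ _ = z * f₀ a
    rw [hf₀, hf₀]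
    have : (Submodule.Quotient.mk ((T 1 : LaurentPolynomial ℚ) • a) : Q) =
      (Ideal.Quotient.mk m (T 1)) • (Submodule.Quotient.mk a : Q) := rfl
    rw [this, map_smul, smul_eq_mul, map_mul]
    congr 1
    change φ (T 1) = z
    rw [hφT, zpow_one]

theorem stmt2 (𝔄 : Type) [AddCommGroup 𝔄] [Module (LaurentPolynomial ℚ) 𝔄] [Module ℚ 𝔄]
    [IsScalarTower ℚ (LaurentPolynomial ℚ) 𝔄] [Module.Finite (LaurentPolynomial ℚ) 𝔄]
    (δ : Polynomial ℚ) (hδ : δ ≠ 0) (hδ0 : δ.eval 0 ≠ 0)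
    (hann : Module.annihilator (LaurentPolynomial ℚ) 𝔄 =
      Ideal.span {Polynomial.toLaurent δ}) :
    Nontrivial (((𝔄 ⊗[ℚ] 𝔄) ⊗[ℚ] 𝔄) ⧸ holSubM ℚ 𝔄) ↔
      ∃ z₁ z₂ z₃ : ℂ, Polynomial.aeval z₁ δ = 0 ∧ Polynomial.aeval z₂ δ = 0 ∧
        Polynomial.aeval z₃ δ = 0 ∧ z₁ * z₂ * z₃ = 1 := by
  constructor
  · intro hnt
    let τ : Module.End ℚ 𝔄 := Algebra.lsmul ℚ ℚ 𝔄 (T 1 : LaurentPolynomial ℚ)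
    have hτ : Polynomial.aeval τ δ = 0 := by
      rw [Polynomial.aeval_algHom_apply, aux_toLaurent]
      ext a
      have : Polynomial.toLaurent δ ∈ Module.annihilator (LaurentPolynomial ℚ) 𝔄 := by
        rw [hann]; exact Ideal.mem_span_singleton_self _
      exact Module.mem_annihilator.1 this a
    let A₁ : Module.End ℚ 𝔄 →ₐ[ℚ] Module.End ℚ ((𝔄 ⊗[ℚ] 𝔄) ⊗[ℚ] 𝔄) :=
      (Module.End.rTensorAlgHom ℚ (𝔄 ⊗[ℚ] 𝔄) 𝔄).comp (Module.End.rTensorAlgHom ℚ 𝔄 𝔄)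
    let A₂ : Module.End ℚ 𝔄 →ₐ[ℚ] Module.End ℚ ((𝔄 ⊗[ℚ] 𝔄) ⊗[ℚ] 𝔄) :=
      (Module.End.rTensorAlgHom ℚ (𝔄 ⊗[ℚ] 𝔄) 𝔄).comp (Module.End.lTensorAlgHom ℚ 𝔄 𝔄)
    let A₃ : Module.End ℚ 𝔄 →ₐ[ℚ] Module.End ℚ ((𝔄 ⊗[ℚ] 𝔄) ⊗[ℚ] 𝔄) :=
      Module.End.lTensorAlgHom ℚ 𝔄 (𝔄 ⊗[ℚ] 𝔄)
    have e₁ : ∀ a b c : 𝔄, A₁ τ ((a ⊗ₜ b) ⊗ₜ c) = (τ a ⊗ₜ b) ⊗ₜ c := fun _ _ _ => rfl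
    have e₂ : ∀ a b c : 𝔄, A₂ τ ((a ⊗ₜ b) ⊗ₜ c) = (a ⊗ₜ τ b) ⊗ₜ c := fun _ _ _ => rfl
    have e₃ : ∀ a b c : 𝔄, A₃ τ ((a ⊗ₜ b) ⊗ₜ c) = (a ⊗ₜ b) ⊗ₜ τ c := fun _ _ _ => rfl
    have c₁₂ : A₁ τ * A₂ τ = A₂ τ * A₁ τ := by
      apply TensorProduct.ext_threefold
      intro a b c
      simp only [Module.End.mul_apply, e₁, e₂]
    have c₁₃ : A₁ τ * A₃ τ = A₃ τ * A₁ τ := by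
      apply TensorProduct.ext_threefold
      intro a b c
      simp only [Module.End.mul_apply, e₁, e₃]
    have c₂₃ : A₂ τ * A₃ τ = A₃ τ * A₂ τ := by
      apply TensorProduct.ext_threefold
      intro a b c
      simp only [Module.End.mul_apply, e₂, e₃]
    have hA : ∀ A : Module.End ℚ 𝔄 →ₐ[ℚ] Module.End ℚ ((𝔄 ⊗[ℚ] 𝔄) ⊗[ℚ] 𝔄),
        Polynomial.aeval (A τ) δ = 0 := by
      intro A
      rw [Polynomial.aeval_algHom_apply, hτ, map_zero]
    refine aux_noncomm _ δ hδ (A₁ τ) (A₂ τ) (A₃ τ) (hA A₁) (hA A₂) (hA A₃) c₁₂ c₁₃ c₂₃ ?_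
    rintro ⟨u, hu'⟩
    have hle : ∀ q, (A₁ τ * A₂ τ * A₃ τ - 1) q ∈ holSubM ℚ 𝔄 := by
      intro q
      have : (⊤ : Submodule ℚ ((𝔄 ⊗[ℚ] 𝔄) ⊗[ℚ] 𝔄)) ≤
          (holSubM ℚ 𝔄).comap (A₁ τ * A₂ τ * A₃ τ - 1) := by
        rw [← TensorProduct.span_tmul_eq_top, Submodule.span_le]
        rintro _ ⟨p, c, rfl⟩
        induction p using TensorProduct.induction_on with
        | zero => rw [TensorProduct.zero_tmul]; exact Submodule.zero_mem _
        | add p q hp hq => rw [TensorProduct.add_tmul]; exact Submodule.add_mem _ hp hq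
        | tmul a b =>
          change (A₁ τ * A₂ τ * A₃ τ - 1) _ ∈ holSubM ℚ 𝔄
          rw [← Submodule.neg_mem_iff]
          apply Submodule.subset_span
          refine ⟨a, b, c, ?_⟩
          rw [LinearMap.sub_apply, Module.End.mul_apply, Module.End.mul_apply, e₃, e₂, e₁, neg_sub]
          rfl
      exact this trivial
    have htop : holSubM ℚ 𝔄 = ⊤ := by
      rw [eq_top_iff]
      intro q _
      have := hle (u q)
      rw [← Module.End.mul_apply, hu'] at this
      exact this
    exact (Submodule.Quotient.nontrivial_iff.1 hnt) htop
  · rintro ⟨z₁, z₂, z₃, h₁, h₂, h₃, hz⟩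
    obtain ⟨f₁, v₁, hv₁, hf₁⟩ := aux_functional 𝔄 δ hδ hδ0 hann z₁ h₁
    obtain ⟨f₂, v₂, hv₂, hf₂⟩ := aux_functional 𝔄 δ hδ hδ0 hann z₂ h₂
    obtain ⟨f₃, v₃, hv₃, hf₃⟩ := aux_functional 𝔄 δ hδ hδ0 hann z₃ h₃
    let F : (𝔄 ⊗[ℚ] 𝔄) ⊗[ℚ] 𝔄 →ₗ[ℚ] ℂ :=
      LinearMap.mul' ℚ ℂ ∘ₗ TensorProduct.map (LinearMap.mul' ℚ ℂ ∘ₗ TensorProduct.map f₁ f₂) f₃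
    have hF : ∀ a b c, F ((a ⊗ₜ b) ⊗ₜ c) = f₁ a * f₂ b * f₃ c := fun _ _ _ => rfl
    rw [Submodule.Quotient.nontrivial_iff]
    intro htop
    have hle : holSubM ℚ 𝔄 ≤ LinearMap.ker F := by
      refine Submodule.span_le.2 ?_
      rintro _ ⟨a, b, c, rfl⟩
      change F _ = 0
      rw [map_sub, hF, hF, hf₁, hf₂, hf₃]
      linear_combination (-(f₁ a * f₂ b * f₃ c)) * hz
    have : (v₁ ⊗ₜ v₂) ⊗ₜ v₃ ∈ LinearMap.ker F := hle (htop ▸ Submodule.mem_top)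
    rw [LinearMap.mem_ker, hF] at this
    exact mul_ne_zero (mul_ne_zero hv₁ hv₂) hv₃ this
end
end

section
/- Let q ≥ 1 and for 1 ≤ i ≤ q let π_i ∈ ℚ[t] be irreducible with π_i(0) ≠ 0, let m_i ≥ 1, set δ_i = π_i^{m_i} and A_i = ℚ[t^{±1}]/(δ_i), and let η_i ∈ A_i be the class of 1. Set 𝔄 = ⊕_{i=1}^q A_i, and let ℋ be the quotient of Λ³_ℚ 𝔄 by the ℚ-subspace spanned by all β₁∧β₂∧β₃ − tβ₁∧tβ₂∧tβ₃ with β_j ∈ 𝔄. For a triple (i₁, i₂, i₃) ∈ {1, …, q}³, let ℋ(i₁,i₂,i₃) ⊆ ℋ be the ℚ-span of the classes of t^{k₁}η_{i₁} ∧ t^{k₂}η_{i₂} ∧ t^{k₃}η_{i₃} for all k₁, k₂, k₃ ∈ ℤ. Then ℋ(i₁,i₂,i₃) is nonzero if and only if there exist complex roots z₁, z₂, z₃ of δ_{i₁}, δ_{i₂}, δ_{i₃} respectively such that z₁z₂z₃ = 1 and, for each j ∈ {1,2,3}, the multiplicity m_{i_j} is at least the number of indices l ∈ {1,2,3} with i_l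 = i_j and z_l = z_j. -/
open LaurentPolynomial TensorProduct

set_option synthInstance.maxHeartbeats 1000000
set_option maxHeartbeats 1000000
noncomputable section

/-- The wedge `a ∧ b ∧ c` as an element of the third exterior power. -/
def wedge3 (K : Type) [Field K] (M : Type) [AddCommGroup M] [Module K M] (a b c : M) :
    ⋀[K]^3 M :=
  ⟨ExteriorAlgebra.ιMulti K 3 ![a, b, c],
    ExteriorAlgebra.ιMulti_range K 3 (Set.mem_range_self _)⟩

/-- The holonomy subspace of the third exterior power: the `K`-span of the elements
`β₁ ∧ β₂ ∧ β₃ - tβ₁ ∧ tβ₂ ∧ tβ₃`. -/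
def wedgeHol (K : Type) [Field K] (M : Type) [AddCommGroup M]
    [Module (LaurentPolynomial K) M] [Module K M]
    [IsScalarTower K (LaurentPolynomial K) M] :
    Submodule K ↥(⋀[K]^3 M) :=
  Submodule.span K { x | ∃ a b c : M,
    x = wedge3 K M a b c -
      wedge3 K M ((T 1 : LaurentPolynomial K) • a) ((T 1 : LaurentPolynomial K) • b)
        ((T 1 : LaurentPolynomial K) • c) }

/-- `ℋ(M)`: the quotient of the third exterior power by the holonomy subspace. -/
abbrev Hcal (K : Type) [Field K] (M : Type) [AddCommGroup M]
    [Module (LaurentPolynomial K) M] [Module K M]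
    [IsScalarTower K (LaurentPolynomial K) M] : Type :=
  ↥(⋀[K]^3 M) ⧸ wedgeHol K M


open Polynomial in
def PP (z : ℕ → ℂ) (n : ℕ) : Polynomial ℂ := ∏ i ∈ Finset.range n, (X - Polynomial.C (z i))

open Polynomial in
theorem PP_zero (z : ℕ → ℂ) : PP z 0 = 1 := by simp [PP]

open Polynomial in
theorem X_mul_PP (z : ℕ → ℂ) (n : ℕ) : X * PP z n = z n • PP z n + PP z (n+1) := by
  rw [PP, PP, Finset.prod_range_succ, Polynomial.smul_eq_C_mul]; ring

open Polynomial in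
theorem flag_ext (z : ℕ → ℂ) (n : ℕ) (h : Polynomial ℂ →ₗ[ℂ] ℂ)
    (hn : ∀ p, h (PP z n * p) = 0) (hj : ∀ j < n, h (PP z j) = 0) (a : ℕ) : h (X ^ a) = 0 := by
  have key : ∀ k, ∀ j ≤ n, h (X ^ k * PP z j) = 0 := by
    intro k
    induction k with
    | zero =>
      intro j hjn
      rcases hjn.lt_or_eq with hlt | rfl
      · simpa using hj j hlt
      · simpa using hn 1
    | succ k ih =>
      intro j hjn
      rcases hjn.lt_or_eq with hlt | rfl
      · rw [pow_succ, mul_assoc, X_mul_PP, mul_add, map_add, mul_smul_comm, map_smul,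
          ih j hjn, ih (j+1) hlt]; simp
      · rw [mul_comm]; exact hn _
  simpa [PP_zero] using key a 0 (Nat.zero_le _)

open Polynomial in
theorem flag_exists (G : Polynomial ℂ →ₗ[ℂ] Polynomial ℂ →ₗ[ℂ] Polynomial ℂ →ₗ[ℂ] ℂ)
    (n1 n2 n3 : ℕ) (z1 z2 z3 : ℕ → ℂ)
    (h1 : ∀ p q r, G (PP z1 n1 * p) q r = 0)
    (h2 : ∀ p q r, G p (PP z2 n2 * q) r = 0)
    (h3 : ∀ p q r, G p q (PP z3 n3 * r) = 0)
    (hinv : ∀ p q r, G (X * p) (X * q) (X * r) = G p q r)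
    (a b d : ℕ) (hne : G (X ^ a) (X ^ b) (X ^ d) ≠ 0) :
    ∃ j1 < n1, ∃ j2 < n2, ∃ j3 < n3, G (PP z1 j1) (PP z2 j2) (PP z3 j3) ≠ 0 ∧
      z1 j1 * z2 j2 * z3 j3 = 1 := by
  classical
  let S : Finset (ℕ × ℕ × ℕ) :=
    (Finset.range n1 ×ˢ Finset.range n2 ×ˢ Finset.range n3).filter
      (fun t => G (PP z1 t.1) (PP z2 t.2.1) (PP z3 t.2.2) ≠ 0)
  have hS : S.Nonempty := by
    by_contra hS
    rw [Finset.not_nonempty_iff_eq_empty] at hS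
    have h0 : ∀ j1 < n1, ∀ j2 < n2, ∀ j3 < n3, G (PP z1 j1) (PP z2 j2) (PP z3 j3) = 0 := by
      intro j1 hj1 j2 hj2 j3 hj3
      by_contra hh
      have : (j1, j2, j3) ∈ S := by simp [S, hj1, hj2, hj3, hh]
      simp [hS] at this
    apply hne
    refine flag_ext z1 n1 ((G.flip (X ^ b)).flip (X ^ d)) (fun p => h1 _ _ _) ?_ a
    intro j1 hj1
    refine flag_ext z2 n2 ((G (PP z1 j1)).flip (X ^ d)) (fun p => h2 _ _ _) ?_ b
    intro j2 hj2
    exact flag_ext z3 n3 (G (PP z1 j1) (PP z2 j2)) (fun p => h3 _ _ _) (h0 j1 hj1 j2 hj2) d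
  obtain ⟨⟨j1, j2, j3⟩, hmem, hmax⟩ := S.exists_max_image (fun t => t.1 + t.2.1 + t.2.2) hS
  simp only [S, Finset.mem_filter, Finset.mem_product, Finset.mem_range] at hmem hmax
  obtain ⟨⟨hj1, hj2, hj3⟩, hG⟩ := hmem
  refine ⟨j1, hj1, j2, hj2, j3, hj3, hG, ?_⟩
  have hz : ∀ k1 ≤ n1, ∀ k2 ≤ n2, ∀ k3 ≤ n3, j1 + j2 + j3 < k1 + k2 + k3 →
      G (PP z1 k1) (PP z2 k2) (PP z3 k3) = 0 := by
    intro k1 hk1 k2 hk2 k3 hk3 hlt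
    rcases hk1.lt_or_eq with hk1 | rfl
    · rcases hk2.lt_or_eq with hk2 | rfl
      · rcases hk3.lt_or_eq with hk3 | rfl
        · by_contra hh
          have := hmax (k1, k2, k3) ⟨⟨hk1, hk2, hk3⟩, hh⟩
          simp at this; omega
        · simpa using h3 (PP z1 k1) (PP z2 k2) 1
      · simpa using h2 (PP z1 k1) 1 (PP z3 k3)
    · simpa using h1 1 (PP z2 k2) (PP z3 k3)
  have e := hinv (PP z1 j1) (PP z2 j2) (PP z3 j3)
  simp only [X_mul_PP, map_add, map_smul, LinearMap.add_apply, LinearMap.smul_apply] at e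
  rw [hz j1 hj1.le j2 hj2.le (j3+1) hj3 (by omega), hz j1 hj1.le (j2+1) hj2 (j3+1) hj3 (by omega),
    hz j1 hj1.le (j2+1) hj2 j3 hj3.le (by omega), hz (j1+1) hj1 (j2+1) hj2 j3 hj3.le (by omega),
    hz (j1+1) hj1 j2 hj2.le j3 hj3.le (by omega), hz (j1+1) hj1 j2 hj2.le (j3+1) hj3 (by omega),
    hz (j1+1) hj1 (j2+1) hj2 (j3+1) hj3 (by omega)] at e
  simp only [smul_eq_mul, mul_zero, add_zero] at e
  apply mul_right_cancel₀ hG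
  linear_combination e

open Polynomial in
theorem roots_data (p : Polynomial ℚ) (hp : Irreducible p) (m : ℕ) (hm : 1 ≤ m) :
    ∃ (n : ℕ) (z : ℕ → ℂ) (c : ℂ), c ≠ 0 ∧ PP z n = Polynomial.C c * (p ^ m).map (algebraMap ℚ ℂ) ∧
      (∀ w, ((Finset.range n).filter (fun i => z i = w)).card ≤ m) ∧
      (∀ i < n, aeval (z i) (p ^ m) = 0) := by
  classical
  set f := (p ^ m).map (algebraMap ℚ ℂ) with hf
  have hp0 : p ≠ 0 := hp.ne_zero
  have hf0 : f ≠ 0 := by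
    rw [hf, Polynomial.map_ne_zero_iff (algebraMap ℚ ℂ).injective]; exact pow_ne_zero _ hp0
  have hlc : f.leadingCoeff ≠ 0 := leadingCoeff_ne_zero.mpr hf0
  have hsp : Polynomial.C f.leadingCoeff * (f.roots.map (fun a => X - Polynomial.C a)).prod = f :=
    (IsAlgClosed.splits f).eq_prod_roots.symm
  set s := f.roots.toList with hs
  have hs' : f.roots = (Multiset.range s.length).map (fun i => s.getD i 0) := by
    rw [← Multiset.coe_toList f.roots, ← hs, Multiset.range, Multiset.map_coe]
    congr 1
    apply List.ext_getElem
    · simp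
    · intro i h1 h2
      simp [h1]
  refine ⟨s.length, fun i => s.getD i 0, f.leadingCoeff⁻¹, inv_ne_zero hlc, ?_, ?_, ?_⟩
  · rw [← hsp]
    have : (Polynomial.C f.leadingCoeff * (f.roots.map (fun a => X - Polynomial.C a)).prod).leadingCoeff
        = f.leadingCoeff := by rw [hsp]
    rw [this, ← mul_assoc, ← C_mul, inv_mul_cancel₀ hlc, C_1, one_mul, hs', PP, Multiset.map_map]
    rfl
  · intro w
    have h1 : ((Finset.range s.length).filter (fun i => s.getD i 0 = w)).card
        = f.roots.count w := by
      conv_rhs => rw [hs', Multiset.count_map]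
      rw [Finset.card_def]
      simp [Finset.filter, eq_comm]
    rw [h1, hf, Polynomial.map_pow, roots_pow, Multiset.count_nsmul]
    have hsep : (p.map (algebraMap ℚ ℂ)).Separable := hp.separable.map
    have := Multiset.nodup_iff_count_le_one.mp (nodup_roots hsep) w
    nlinarith
  · intro i hi
    have : s.getD i 0 ∈ f.roots := by
      rw [hs', Multiset.mem_map]
      exact ⟨i, by simpa using hi, rfl⟩
    have := (mem_roots hf0).mp this
    rw [IsRoot, hf, eval_map_algebraMap] at this
    exact this

theorem inv_shift {M : Type} [AddCommGroup M]
    [Module (LaurentPolynomial ℚ) M] [Module ℚ M]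
    (D : M [⋀^Fin 3]→ₗ[ℚ] ℚ)
    (hD : ∀ a b c : M, D ![(T 1 : LaurentPolynomial ℚ) • a, (T 1 : LaurentPolynomial ℚ) • b,
      (T 1 : LaurentPolynomial ℚ) • c] = D ![a, b, c]) (N : ℕ) (a b c : M) :
    D ![(T N : LaurentPolynomial ℚ) • a, (T N : LaurentPolynomial ℚ) • b,
      (T N : LaurentPolynomial ℚ) • c] = D ![a, b, c] := by
  induction N with
  | zero => simp
  | succ N ih =>
    rw [← ih, ← hD (T (N : ℤ) • a)]
    simp only [smul_smul, ← T_add]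
    push_cast
    simp only [add_comm]

open Polynomial in
theorem kill {M : Type} [AddCommGroup M]
    [Module (LaurentPolynomial ℚ) M] [Module ℚ M] [IsScalarTower ℚ (LaurentPolynomial ℚ) M]
    (L : M →ₗ[ℚ] ℚ) (η : M) (δ : Polynomial ℚ) (hδ : toLaurent δ • η = 0)
    (h : Polynomial ℂ →ₗ[ℂ] ℂ)
    (hL : ∀ a : ℕ, h (X ^ a) = (L ((T a : LaurentPolynomial ℚ) • η) : ℂ))
    (p : Polynomial ℂ) : h (δ.map (algebraMap ℚ ℂ) * p) = 0 := by
  have key : ∀ f : Polynomial ℚ, h (f.map (algebraMap ℚ ℂ)) = (L (toLaurent f • η) : ℂ) := by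
    intro f
    induction f using Polynomial.induction_on' with
    | add f g hf hg => simp [hf, hg, add_smul]
    | monomial n a =>
      rw [Polynomial.map_monomial, ← C_mul_X_pow_eq_monomial, ← Polynomial.smul_eq_C_mul, map_smul, hL,
        ← C_mul_X_pow_eq_monomial, toLaurent_C_mul_X_pow, ← LaurentPolynomial.smul_eq_C_mul,
        smul_assoc, LinearMap.map_smul L]
      simp
  induction p using Polynomial.induction_on' with
  | add f g hf hg => simp [mul_add, hf, hg]
  | monomial n a =>
    have : δ.map (algebraMap ℚ ℂ) * monomial n a = a • (δ * X ^ n).map (algebraMap ℚ ℂ) := by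
      rw [← C_mul_X_pow_eq_monomial, Polynomial.smul_eq_C_mul]; simp; ring
    rw [this, map_smul, key, map_mul, mul_comm, mul_smul, hδ]; simp

open Polynomial in
theorem card_aux {q : ℕ} (m n : Fin q → ℕ) (z : Fin q → ℕ → ℂ) (I : Fin 3 → Fin q) (J : Fin 3 → ℕ)
    (hz : ∀ i w, ((Finset.range (n i)).filter (fun a => z i a = w)).card ≤ m i)
    (hJ : ∀ l, J l < n (I l)) (hd : ∀ l l', l ≠ l' → I l = I l' → J l ≠ J l') (j : Fin 3) :
    Nat.card {l : Fin 3 // I l = I j ∧ z (I l) (J l) = z (I j) (J j)} ≤ m (I j) := by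
  classical
  refine le_trans ?_ (hz (I j) (z (I j) (J j)))
  rw [Nat.card_eq_fintype_card, Fintype.card_subtype]
  apply Finset.card_le_card_of_injOn J
  · intro l hl
    simp only [Finset.coe_filter, Finset.mem_univ, true_and, Set.mem_ofPred_eq] at hl
    simp only [Finset.coe_filter, Finset.mem_range, Set.mem_ofPred_eq]
    exact ⟨hl.1 ▸ hJ l, hl.1 ▸ hl.2⟩
  · intro l hl l' hl' h
    simp only [Finset.coe_filter, Finset.mem_univ, true_and, Set.mem_ofPred_eq] at hl hl'
    by_contra hne
    exact hd l l' hne (hl.1.trans hl'.1.symm) h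

open Polynomial in
theorem fwd {M : Type} [AddCommGroup M]
    [Module (LaurentPolynomial ℚ) M] [Module ℚ M] [IsScalarTower ℚ (LaurentPolynomial ℚ) M]
    (q : ℕ) (π : Fin q → Polynomial ℚ)
    (hirr : ∀ i, Irreducible (π i))
    (m : Fin q → ℕ) (hm : ∀ i, 1 ≤ m i)
    (η : Fin q → M) (hη : ∀ i, toLaurent (π i ^ m i) • η i = 0)
    (i₁ i₂ i₃ : Fin q) (D : M [⋀^Fin 3]→ₗ[ℚ] ℚ)
    (hD : ∀ a b c : M, D ![(T 1 : LaurentPolynomial ℚ) • a, (T 1 : LaurentPolynomial ℚ) • b,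
      (T 1 : LaurentPolynomial ℚ) • c] = D ![a, b, c])
    (k₁ k₂ k₃ : ℤ) (hne : D ![(T k₁ : LaurentPolynomial ℚ) • η i₁,
      (T k₂ : LaurentPolynomial ℚ) • η i₂, (T k₃ : LaurentPolynomial ℚ) • η i₃] ≠ 0) :
    ∃ z₁ z₂ z₃ : ℂ,
        Polynomial.aeval z₁ (π i₁ ^ m i₁) = 0 ∧ Polynomial.aeval z₂ (π i₂ ^ m i₂) = 0 ∧
        Polynomial.aeval z₃ (π i₃ ^ m i₃) = 0 ∧ z₁ * z₂ * z₃ = 1 ∧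
        ∀ j : Fin 3, Nat.card {l : Fin 3 //
            ![i₁, i₂, i₃] l = ![i₁, i₂, i₃] j ∧ ![z₁, z₂, z₃] l = ![z₁, z₂, z₃] j} ≤
          m (![i₁, i₂, i₃] j) := by
  classical
  choose n z c hc hP hcard hroot using fun i => roots_data (π i) (hirr i) (m i) (hm i)
  -- shift to natural exponents
  obtain ⟨a, b, d, habd⟩ : ∃ a b d : ℕ, D ![(T a : LaurentPolynomial ℚ) • η i₁,
      (T b : LaurentPolynomial ℚ) • η i₂, (T d : LaurentPolynomial ℚ) • η i₃] ≠ 0 := by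
    rw [← inv_shift D hD (k₁.natAbs + k₂.natAbs + k₃.natAbs)] at hne
    simp only [smul_smul, ← T_add] at hne
    refine ⟨(((k₁.natAbs + k₂.natAbs + k₃.natAbs : ℕ) : ℤ) + k₁).toNat,
      (((k₁.natAbs + k₂.natAbs + k₃.natAbs : ℕ) : ℤ) + k₂).toNat,
      (((k₁.natAbs + k₂.natAbs + k₃.natAbs : ℕ) : ℤ) + k₃).toNat, ?_⟩
    rw [Int.toNat_of_nonneg (by omega), Int.toNat_of_nonneg (by omega),
      Int.toNat_of_nonneg (by omega)]
    exact hne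
  let cc : ℕ → ℕ → ℕ → ℂ := fun a b d => (D ![(T a : LaurentPolynomial ℚ) • η i₁,
      (T b : LaurentPolynomial ℚ) • η i₂, (T d : LaurentPolynomial ℚ) • η i₃] : ℂ)
  let B := Polynomial.basisMonomials ℂ
  let G : Polynomial ℂ →ₗ[ℂ] Polynomial ℂ →ₗ[ℂ] Polynomial ℂ →ₗ[ℂ] ℂ :=
    B.constr ℂ (fun a => B.constr ℂ (fun b => B.constr ℂ (fun d => cc a b d)))
  have hB : ∀ a, (X ^ a : Polynomial ℂ) = B a := by
    intro a; simp [B, X_pow_eq_monomial]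
  have hG : ∀ a b d, G (X ^ a) (X ^ b) (X ^ d) = cc a b d := by
    intro a b d
    simp only [G, hB, Module.Basis.constr_basis]
  -- trilinear extensionality
  have ext3 : ∀ G₁ G₂ : Polynomial ℂ →ₗ[ℂ] Polynomial ℂ →ₗ[ℂ] Polynomial ℂ →ₗ[ℂ] ℂ,
      (∀ a b d, G₁ (X ^ a) (X ^ b) (X ^ d) = G₂ (X ^ a) (X ^ b) (X ^ d)) → G₁ = G₂ := by
    intro G₁ G₂ h
    refine B.ext fun a => B.ext fun b => B.ext fun d => ?_
    simpa only [hB] using h a b d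
  have hinv : ∀ p q r, G (X * p) (X * q) (X * r) = G p q r := by
    let μ : Polynomial ℂ →ₗ[ℂ] Polynomial ℂ := LinearMap.mulLeft ℂ X
    let G' : Polynomial ℂ →ₗ[ℂ] Polynomial ℂ →ₗ[ℂ] Polynomial ℂ →ₗ[ℂ] ℂ :=
      LinearMap.mk₂ ℂ (fun p q => (G (μ p) (μ q)).comp μ)
        (by intros; ext; simp) (by intros; ext; simp) (by intros; ext; simp) (by intros; ext; simp)
    have : G' = G := by
      apply ext3
      intro a b d
      have : G' (X ^ a) (X ^ b) (X ^ d) = G (X * X ^ a) (X * X ^ b) (X * X ^ d) := rfl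
      rw [this, ← pow_succ', ← pow_succ', ← pow_succ', hG, hG]
      simp only [cc]
      rw [← hD (T (a : ℤ) • η i₁)]
      simp only [smul_smul, ← T_add]
      push_cast
      simp only [add_comm]
    intro p q r
    exact congrArg (fun g : Polynomial ℂ →ₗ[ℂ] Polynomial ℂ →ₗ[ℂ] Polynomial ℂ →ₗ[ℂ] ℂ => g p q r) this
  have tri0 : ∀ G₁ : Polynomial ℂ →ₗ[ℂ] Polynomial ℂ →ₗ[ℂ] ℂ,
      (∀ b d, G₁ (X ^ b) (X ^ d) = 0) → ∀ p q, G₁ p q = 0 := by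
    intro G₁ h p q
    have : G₁ = 0 := by
      refine B.ext fun a => B.ext fun b => ?_
      rw [← hB, ← hB, h]; rfl
    simp [this]
  have h1 : ∀ p q r, G (PP (z i₁) (n i₁) * p) q r = 0 := by
    intro p q r
    refine tri0 (G _) (fun b d => ?_) q r
    rw [hP, mul_assoc, ← Polynomial.smul_eq_C_mul, map_smul]
    have := kill (D.toMultilinearMap.toLinearMap ![0, (T b : LaurentPolynomial ℚ) • η i₂,
      (T d : LaurentPolynomial ℚ) • η i₃] 0) (η i₁) _ (hη i₁) ((G.flip (X ^ b)).flip (X ^ d))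
      (fun a => by
        simp only [LinearMap.flip_apply, hG, cc, MultilinearMap.toLinearMap_apply]
        refine congrArg (fun v => ((D v : ℚ) : ℂ)) ?_; funext l; fin_cases l <;> simp [Function.update]) p
    simp only [LinearMap.flip_apply] at this
    simp only [LinearMap.smul_apply, this, smul_zero]
  have h2 : ∀ p q r, G p (PP (z i₂) (n i₂) * q) r = 0 := by
    intro p q r
    refine tri0 (G.flip _) (fun b d => ?_) p r
    rw [hP, mul_assoc, ← Polynomial.smul_eq_C_mul, map_smul]
    have := kill (D.toMultilinearMap.toLinearMap ![(T b : LaurentPolynomial ℚ) • η i₁, 0,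
      (T d : LaurentPolynomial ℚ) • η i₃] 1) (η i₂) _ (hη i₂) ((G (X ^ b)).flip (X ^ d))
      (fun a => by
        simp only [LinearMap.flip_apply, hG, cc, MultilinearMap.toLinearMap_apply]
        refine congrArg (fun v => ((D v : ℚ) : ℂ)) ?_; funext l; fin_cases l <;> simp [Function.update]) q
    simp only [LinearMap.flip_apply] at this
    simp only [LinearMap.smul_apply, LinearMap.flip_apply, this, smul_zero]
  have h3 : ∀ p q r, G p q (PP (z i₃) (n i₃) * r) = 0 := by
    intro p q r
    have := tri0 (G.compr₂ (LinearMap.applyₗ (PP (z i₃) (n i₃) * r))) (fun b d => ?_) p q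
    · simpa using this
    rw [LinearMap.compr₂_apply, LinearMap.applyₗ_apply_apply, hP, mul_assoc, ← Polynomial.smul_eq_C_mul,
      map_smul]
    have := kill (D.toMultilinearMap.toLinearMap ![(T b : LaurentPolynomial ℚ) • η i₁,
      (T d : LaurentPolynomial ℚ) • η i₂, 0] 2) (η i₃) _ (hη i₃) (G (X ^ b) (X ^ d))
      (fun a => by
        simp only [hG, cc, MultilinearMap.toLinearMap_apply]
        refine congrArg (fun v => ((D v : ℚ) : ℂ)) ?_; funext l; fin_cases l <;> simp [Function.update]) r
    simp only [this, smul_zero]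
  obtain ⟨j₁, hj₁, j₂, hj₂, j₃, hj₃, hGne, hz⟩ := flag_exists G _ _ _ _ _ _ h1 h2 h3 hinv a b d
    (by rw [hG]; simpa [cc] using habd)
  have a12 : i₁ = i₂ → ∀ p r, G p p r = 0 := by
    intro h p r
    have : G = -G.flip := by
      apply ext3
      intro a b d
      simp only [LinearMap.neg_apply, LinearMap.flip_apply, hG, cc]
      rw [← h]
      have := D.map_swap ![(T a : LaurentPolynomial ℚ) • η i₁, (T b : LaurentPolynomial ℚ) • η i₁,
        (T d : LaurentPolynomial ℚ) • η i₃] (i := 0) (j := 1) (by decide)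
      rw [eq_neg_iff_add_eq_zero, ← neg_eq_iff_add_eq_zero, ← Rat.cast_neg, ← this]
      congr 2; ext l; fin_cases l <;> simp [Equiv.swap_apply_def]
    have h' := congrArg (fun g : Polynomial ℂ →ₗ[ℂ] Polynomial ℂ →ₗ[ℂ] Polynomial ℂ →ₗ[ℂ] ℂ => g p p r) this
    simp only [LinearMap.neg_apply, LinearMap.flip_apply] at h'
    linear_combination h' / 2
  have a23 : i₂ = i₃ → ∀ p r, G r p p = 0 := by
    intro h p r
    let G' : Polynomial ℂ →ₗ[ℂ] Polynomial ℂ →ₗ[ℂ] Polynomial ℂ →ₗ[ℂ] ℂ :=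
      LinearMap.mk₂ ℂ (fun p q => (G p).flip q)
        (by intros; ext; simp) (by intros; ext; simp) (by intros; ext; simp) (by intros; ext; simp)
    have hG' : ∀ p q r, G' p q r = G p r q := fun p q r => rfl
    have : G = -G' := by
      apply ext3
      intro a b d
      simp only [LinearMap.neg_apply, hG', hG, cc]
      rw [← h]
      have := D.map_swap ![(T a : LaurentPolynomial ℚ) • η i₁, (T b : LaurentPolynomial ℚ) • η i₂,
        (T d : LaurentPolynomial ℚ) • η i₂] (i := 1) (j := 2) (by decide)
      rw [eq_neg_iff_add_eq_zero, ← neg_eq_iff_add_eq_zero, ← Rat.cast_neg, ← this]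
      congr 2; ext l; fin_cases l <;> simp [Equiv.swap_apply_def]
    have h' := congrArg (fun g : Polynomial ℂ →ₗ[ℂ] Polynomial ℂ →ₗ[ℂ] Polynomial ℂ →ₗ[ℂ] ℂ => g r p p) this
    simp only [LinearMap.neg_apply, hG'] at h'
    linear_combination h' / 2
  have a13 : i₁ = i₃ → ∀ p r, G p r p = 0 := by
    intro h p r
    let G' : Polynomial ℂ →ₗ[ℂ] Polynomial ℂ →ₗ[ℂ] Polynomial ℂ →ₗ[ℂ] ℂ :=
      LinearMap.mk₂ ℂ (fun p q => (G.flip q).flip p)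
        (by intros; ext; simp) (by intros; ext; simp) (by intros; ext; simp) (by intros; ext; simp)
    have hG' : ∀ p q r, G' p q r = G r q p := fun p q r => rfl
    have : G = -G' := by
      apply ext3
      intro a b d
      simp only [LinearMap.neg_apply, hG', hG, cc]
      rw [← h]
      have := D.map_swap ![(T a : LaurentPolynomial ℚ) • η i₁, (T b : LaurentPolynomial ℚ) • η i₂,
        (T d : LaurentPolynomial ℚ) • η i₁] (i := 0) (j := 2) (by decide)
      rw [eq_neg_iff_add_eq_zero, ← neg_eq_iff_add_eq_zero, ← Rat.cast_neg, ← this]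
      congr 2; ext l; fin_cases l <;> simp [Equiv.swap_apply_def]
    have h' := congrArg (fun g : Polynomial ℂ →ₗ[ℂ] Polynomial ℂ →ₗ[ℂ] Polynomial ℂ →ₗ[ℂ] ℂ => g p r p) this
    simp only [LinearMap.neg_apply, hG'] at h'
    linear_combination h' / 2
  refine ⟨z i₁ j₁, z i₂ j₂, z i₃ j₃, hroot _ _ hj₁, hroot _ _ hj₂, hroot _ _ hj₃, hz, ?_⟩
  have n12 : i₁ = i₂ → j₁ ≠ j₂ := by
    rintro h rfl
    subst h
    exact hGne (a12 rfl _ _)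
  have n23 : i₂ = i₃ → j₂ ≠ j₃ := by
    rintro h rfl
    subst h
    exact hGne (a23 rfl _ _)
  have n13 : i₁ = i₃ → j₁ ≠ j₃ := by
    rintro h rfl
    subst h
    exact hGne (a13 rfl _ _)
  intro j
  have := card_aux m n z ![i₁, i₂, i₃] ![j₁, j₂, j₃] hcard
    (by intro l; fin_cases l <;> simpa) (by
      intro l l' hll
      fin_cases l <;> fin_cases l' <;> simp at hll ⊢
      · exact n12
      · exact n13
      · exact fun h => (n12 h.symm).symm
      · exact n23
      · exact fun h => (n13 h.symm).symm
      · exact fun h => (n23 h.symm).symm) j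
  have e : ∀ l : Fin 3, ![z i₁ j₁, z i₂ j₂, z i₃ j₃] l = z (![i₁, i₂, i₃] l) (![j₁, j₂, j₃] l) := by
    intro l; fin_cases l <;> rfl
  simp only [e]
  exact this

open PowerSeries in
def tauU (w : ℂ) (hw : w ≠ 0) : (PowerSeries ℂ)ˣ :=
  IsUnit.unit (a := PowerSeries.C w + PowerSeries.X) (by
    rw [PowerSeries.isUnit_iff_constantCoeff]; simpa using hw)

def tau (w : ℂ) (hw : w ≠ 0) : LaurentPolynomial ℚ →+* PowerSeries ℂ :=
  LaurentPolynomial.eval₂ (algebraMap ℚ (PowerSeries ℂ)) (tauU w hw)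

theorem tau_T (w : ℂ) (hw : w ≠ 0) (n : ℕ) :
    tau w hw (T n) = (PowerSeries.C w + PowerSeries.X) ^ n := by
  rw [tau, LaurentPolynomial.eval₂_T_n]; rfl

theorem tau_kill (w : ℂ) (hw : w ≠ 0) (p : Polynomial ℚ) (m k : ℕ) (hk : k < m)
    (hp : Polynomial.aeval w (p ^ m) = 0) (f : LaurentPolynomial ℚ) :
    PowerSeries.coeff k (tau w hw (Polynomial.toLaurent (p ^ m) * f)) = 0 := by
  have hp' : Polynomial.aeval w p = 0 := by
    rw [map_pow] at hp; exact pow_eq_zero_iff (by omega) |>.mp hp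
  have h1 : PowerSeries.X ∣ tau w hw (Polynomial.toLaurent p) := by
    rw [PowerSeries.X_dvd_iff, tau, LaurentPolynomial.eval₂_toLaurent, Polynomial.hom_eval₂]
    have : PowerSeries.constantCoeff (R := ℂ) (tauU w hw : PowerSeries ℂ) = w := by
      simp [tauU]
    rw [this, ← hp', Polynomial.aeval_def]
    congr 1
  have h2 : (PowerSeries.X : PowerSeries ℂ) ^ m ∣
      tau w hw (Polynomial.toLaurent (p ^ m) * f) := by
    rw [map_mul, map_pow, map_pow]
    exact Dvd.dvd.mul_right (pow_dvd_pow_of_dvd h1 m) _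
  exact PowerSeries.X_pow_dvd_iff.mp h2 k hk

theorem lam_exists (p : LaurentPolynomial ℚ) (w : ℂ) (hw : w ≠ 0) (k : ℕ)
    (h : ∀ f, PowerSeries.coeff k (tau w hw (p * f)) = 0) :
    ∃ L : LQuot ℚ p →+ ℂ, ∀ f, L (Ideal.Quotient.mk _ f) = PowerSeries.coeff k (tau w hw f) := by
  refine ⟨QuotientAddGroup.lift (Ideal.span {p}).toAddSubgroup
    ((PowerSeries.coeff k (R := ℂ)).toAddMonoidHom.comp (tau w hw).toAddMonoidHom) ?_, ?_⟩
  · intro x hx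
    obtain ⟨f, rfl⟩ := Ideal.mem_span_singleton.mp (show x ∈ Ideal.span {p} from hx)
    exact h f
  · intro f; rfl

abbrev AA (q : ℕ) (π : Fin q → Polynomial ℚ) (m : Fin q → ℕ) : Type :=
  DirectSum (Fin q) (fun i => LQuot ℚ (Polynomial.toLaurent (π i ^ m i)))

theorem L_exists (q : ℕ) (π : Fin q → Polynomial ℚ) (m : Fin q → ℕ) (i : Fin q)
    (w : ℂ) (hw : w ≠ 0) (k : ℕ) (hk : k < m i) (hp : Polynomial.aeval w (π i ^ m i) = 0) :
    ∃ L : AA q π m →+ ℂ, ∀ (v : AA q π m) (f : LaurentPolynomial ℚ),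
      v i = Ideal.Quotient.mk _ f → L v = PowerSeries.coeff k (tau w hw f) := by
  obtain ⟨L, hL⟩ := lam_exists (Polynomial.toLaurent (π i ^ m i)) w hw k
    (tau_kill w hw (π i) (m i) k hk hp)
  refine ⟨L.comp (DFinsupp.evalAddMonoidHom i), fun v f h => ?_⟩
  have : (L.comp (DFinsupp.evalAddMonoidHom i)) v = L (v i) := rfl
  rw [this, h, hL]

def kk {α : Type} (c : Fin 3 → α) (a : Fin 3) : ℕ := by
  classical
  exact (Finset.univ.filter (fun b => b < a ∧ c b = c a)).card

theorem kk_pred {α : Type} (c : Fin 3 → α) (a : Fin 3) (k : ℕ) (h : kk c a = k + 1) :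
    ∃ b < a, c b = c a ∧ kk c b = k := by
  classical
  have hne : (Finset.univ.filter (fun b => b < a ∧ c b = c a)).Nonempty := by
    rw [← Finset.card_pos]; unfold kk at h; omega
  set S := Finset.univ.filter (fun b => b < a ∧ c b = c a) with hS
  have hb := S.max'_mem hne
  have hcS : S.card = k + 1 := h
  set b := S.max' hne with hbdef
  have hb' := hb
  rw [hS, Finset.mem_filter] at hb'
  refine ⟨b, hb'.2.1, hb'.2.2, ?_⟩
  have : Finset.univ.filter (fun x => x < b ∧ c x = c b) = S.erase b := by
    ext x
    simp only [Finset.mem_filter, Finset.mem_univ, true_and, Finset.mem_erase, hS]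
    constructor
    · rintro ⟨h1, h2⟩
      exact ⟨h1.ne, h1.trans hb'.2.1, h2.trans hb'.2.2⟩
    · rintro ⟨h1, h2, h3⟩
      refine ⟨lt_of_le_of_ne (S.le_max' x ?_) h1, h3.trans hb'.2.2.symm⟩
      simp [hS, h2, h3]
  unfold kk
  rw [this, Finset.card_erase_of_mem hb]
  omega

theorem kk_lt {α : Type} (c : Fin 3 → α) (a b : Fin 3) (hab : a < b) (h : c a = c b) :
    kk c a < kk c b := by
  classical
  unfold kk
  apply Finset.card_lt_card
  rw [Finset.ssubset_iff]
  refine ⟨a, by simp, ?_⟩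
  intro x
  simp only [Finset.mem_insert, Finset.mem_filter, Finset.mem_univ, true_and]
  rintro (rfl | ⟨h1, h2⟩)
  · exact ⟨hab, h⟩
  · exact ⟨h1.trans hab, h2.trans h⟩

theorem kk_lt_card {α : Type} (c : Fin 3 → α) (a : Fin 3) :
    kk c a < Nat.card {l : Fin 3 // c l = c a} := by
  classical
  rw [Nat.card_eq_fintype_card, Fintype.card_subtype]
  unfold kk
  apply Finset.card_lt_card
  rw [Finset.ssubset_iff]
  refine ⟨a, by simp, ?_⟩
  intro x
  simp only [Finset.mem_insert, Finset.mem_filter, Finset.mem_univ, true_and]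
  rintro (rfl | ⟨h1, h2⟩)
  · rfl
  · exact h2

open Polynomial in
/-- Hermite interpolation data. -/
theorem interp {q : ℕ} (I : Fin 3 → Fin q) (z : Fin 3 → ℂ) :
    ∃ k : Fin 3 → ℕ, Matrix.det (Matrix.of (fun l a : Fin 3 => if I l = I a then
      ((X + Polynomial.C (z a)) ^ (k l)).coeff (kk (fun b => (I b, z b)) a) else 0)) ≠ 0 := by
  classical
  set c : Fin 3 → Fin q × ℂ := fun b => (I b, z b) with hc
  by_contra! hcon
  let Φ : Fin q → Polynomial ℂ →ₗ[ℂ] (Fin 3 → ℂ) := fun i => LinearMap.pi fun a =>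
    if i = I a then (Polynomial.lcoeff ℂ (kk c a)).comp (taylor (z a)) else 0
  have hΦ : ∀ i p a, Φ i p a = if i = I a then (taylor (z a) p).coeff (kk c a) else 0 := by
    intro i p a
    simp only [Φ, LinearMap.pi_apply]
    split_ifs <;> simp
  let F : MultilinearMap ℂ (fun _ : Fin 3 => Polynomial ℂ) ℂ :=
    (Matrix.detRowAlternating (n := Fin 3) (R := ℂ)).toMultilinearMap.compLinearMap
      (fun l => Φ (I l))
  have hF : ∀ p, F p = Matrix.det (Matrix.of (fun l a => Φ (I l) (p l) a)) := fun p => rfl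
  have hF0 : F = 0 := by
    refine Module.Basis.ext_multilinear (fun _ => Polynomial.basisMonomials ℂ) ?_
    intro v
    rw [hF, zero_apply, ← hcon v]
    congr 1
    ext l a
    simp only [Matrix.of_apply, hΦ, coe_basisMonomials]
    rw [← X_pow_eq_monomial, taylor_X_pow]
  let p : Fin 3 → Polynomial ℂ := fun l => (X - Polynomial.C (z l)) ^ (kk c l) *
    ∏ a ∈ Finset.univ.filter (fun a => z a ≠ z l), (X - Polynomial.C (z a)) ^ 3
  have hk3 : ∀ a, kk c a < 3 := by
    intro a
    refine lt_of_lt_of_le (kk_lt_card c a) ?_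
    rw [Nat.card_eq_fintype_card]
    exact (Fintype.card_subtype_le _).trans (by simp)
  have htp : ∀ l a, taylor (z a) (p l) = (X + Polynomial.C (z a - z l)) ^ (kk c l) *
    ∏ b ∈ Finset.univ.filter (fun b => z b ≠ z l), (X + Polynomial.C (z a - z b)) ^ 3 := by
    intro l a
    have h1 : ∀ b, taylorAlgHom (z a) (X - Polynomial.C (z b)) = X + Polynomial.C (z a - z b) := by
      intro b
      rw [map_sub]
      simp only [taylorAlgHom_apply, taylor_X, taylor_C, Polynomial.C_sub]; ring
    rw [← taylorAlgHom_apply]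
    simp only [p, map_mul, map_prod, map_pow, h1]
  have hval := hF p
  rw [hF0, zero_apply, Matrix.det_of_isUpperTriangular] at hval
  · symm at hval
    rw [Finset.prod_eq_zero_iff] at hval
    obtain ⟨l, -, hl⟩ := hval
    rw [Matrix.of_apply, hΦ, if_pos rfl, htp, sub_self, Polynomial.C_0, add_zero,
      coeff_X_pow_mul', if_pos le_rfl, Nat.sub_self, coeff_zero_eq_eval_zero, eval_prod,
      Finset.prod_eq_zero_iff] at hl
    obtain ⟨b, hb, hb0⟩ := hl
    simp only [Finset.mem_filter, Finset.mem_univ, true_and] at hb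
    simp only [eval_pow, eval_add, eval_X, eval_C, zero_add] at hb0
    exact hb (sub_eq_zero.mp (pow_eq_zero_iff (by norm_num) |>.mp hb0)).symm
  · intro l a hla
    simp only [id] at hla
    rw [Matrix.of_apply, hΦ]
    split_ifs with hI
    · rw [htp]
      by_cases hz : z a = z l
      · rw [hz, sub_self, Polynomial.C_0, add_zero, coeff_X_pow_mul', if_neg]
        have := kk_lt c a l hla (by simp [hc, hI, hz])
        omega
      · have : (X : Polynomial ℂ) ^ 3 ∣ (X + Polynomial.C (z a - z l)) ^ (kk c l) *
          ∏ b ∈ Finset.univ.filter (fun b => z b ≠ z l), (X + Polynomial.C (z a - z b)) ^ 3 := by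
          refine Dvd.dvd.mul_left ?_ _
          refine dvd_trans ?_ (Finset.dvd_prod_of_mem _ (show a ∈ _ by simpa using hz))
          simp
        exact X_pow_dvd_iff.mp this _ (hk3 a)
    · rfl

def detAlt : (Fin 3 → ℂ) [⋀^Fin 3]→ₗ[ℚ] ℂ :=
  { (Matrix.detRowAlternating (n := Fin 3) (R := ℂ)).toMultilinearMap.restrictScalars ℚ with
    map_eq_zero_of_eq' := fun v i j h hij =>
      (Matrix.detRowAlternating (n := Fin 3) (R := ℂ)).map_eq_zero_of_eq v h hij }

theorem detAlt_apply (v : Fin 3 → Fin 3 → ℂ) : detAlt v = Matrix.det (Matrix.of v) := rfl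

def eta (q : ℕ) (π : Fin q → Polynomial ℚ) (m : Fin q → ℕ) (i : Fin q) : AA q π m :=
  DirectSum.of (fun i => LQuot ℚ (Polynomial.toLaurent (π i ^ m i))) i 1

theorem bwd (q : ℕ) (π : Fin q → Polynomial ℚ) (m : Fin q → ℕ) (I : Fin 3 → Fin q)
    (z : Fin 3 → ℂ) (hroot : ∀ a, Polynomial.aeval (z a) (π (I a) ^ m (I a)) = 0)
    (hz : z 0 * z 1 * z 2 = 1)
    (hcard : ∀ j : Fin 3, Nat.card {l : Fin 3 // I l = I j ∧ z l = z j} ≤ m (I j)) :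
    ∃ D : AA q π m [⋀^Fin 3]→ₗ[ℚ] ℂ,
      (∀ a b c : AA q π m, D ![(T 1 : LaurentPolynomial ℚ) • a, (T 1 : LaurentPolynomial ℚ) • b,
        (T 1 : LaurentPolynomial ℚ) • c] = D ![a, b, c]) ∧
      ∃ k : Fin 3 → ℕ, D (fun l => (T (k l) : LaurentPolynomial ℚ) • eta q π m (I l)) ≠ 0 := by
  classical
  have hz0 : ∀ a, z a ≠ 0 := by
    intro a h
    fin_cases a <;> simp at h <;> simp [h] at hz
  set c : Fin 3 → Fin q × ℂ := fun b => (I b, z b) with hc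
  have hkm : ∀ a, kk c a < m (I a) := by
    intro a
    refine lt_of_lt_of_le (kk_lt_card c a) (le_trans (le_of_eq ?_) (hcard a))
    simp [hc, Prod.ext_iff]
  choose L hL using fun a => L_exists q π m (I a) (z a) (hz0 a) (kk c a) (hkm a) (hroot a)
  have hstep : ∀ a, ∃ u : Fin 3 → ℂ, (∀ b, a ≤ b → u b = 0) ∧
      ∀ v : AA q π m, L a ((T 1 : LaurentPolynomial ℚ) • v) = z a * L a v + ∑ b, L b v * u b := by
    intro a
    have hT : ∀ v : AA q π m, ∀ f : LaurentPolynomial ℚ, v (I a) = Ideal.Quotient.mk _ f →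
        L a ((T 1 : LaurentPolynomial ℚ) • v) = PowerSeries.coeff (kk c a)
          ((PowerSeries.C (z a) + PowerSeries.X) * tau (z a) (hz0 a) f) := by
      intro v f hf
      have h1 : ((T 1 : LaurentPolynomial ℚ) • v) (I a) = Ideal.Quotient.mk _ (T 1 * f) := by
        rw [DirectSum.smul_apply, hf]; rfl
      rw [hL a _ _ h1, map_mul]
      have := tau_T (z a) (hz0 a) 1
      rw [pow_one] at this
      rw [← this]; rfl
    rcases hk : kk c a with _ | k
    · refine ⟨0, fun _ _ => rfl, fun v => ?_⟩
      obtain ⟨f, hf⟩ := Ideal.Quotient.mk_surjective (v (I a))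
      rw [hT v f hf.symm, hL a v f hf.symm, hk, add_mul, map_add, PowerSeries.coeff_C_mul,
        PowerSeries.coeff_zero_X_mul]
      simp
    · obtain ⟨b, hba, hcb, hkb⟩ := kk_pred c a k hk
      refine ⟨Pi.single b 1, fun b' hb' => ?_, fun v => ?_⟩
      · rw [Pi.single_eq_of_ne]; exact (hba.trans_le hb').ne'
      · obtain ⟨f, hf⟩ := Ideal.Quotient.mk_surjective (v (I a))
        have hI : I b = I a := congrArg Prod.fst hcb
        have hzz : z b = z a := congrArg Prod.snd hcb
        have hf' : v (I b) = Ideal.Quotient.mk _ f := by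
          rw [hI]; exact hf.symm
        rw [hT v f hf.symm, hL a v f hf.symm, hk, add_mul, map_add, PowerSeries.coeff_C_mul,
          PowerSeries.coeff_succ_X_mul]
        simp only [Pi.single_apply, mul_ite, mul_one, mul_zero, Finset.sum_ite_eq',
          Finset.mem_univ, if_true]
        rw [hL b v f hf', hkb]
        simp only [hzz]
  choose u hu0 hu using hstep
  let Ψ : AA q π m →ₗ[ℚ] (Fin 3 → ℂ) := AddMonoidHom.toRatLinearMap (AddMonoidHom.mk'
    (fun v a => L a v) (fun v w => by funext a; simp))
  have hΨ : ∀ v a, Ψ v a = L a v := fun _ _ => rfl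
  let U : Matrix (Fin 3) (Fin 3) ℂ := Matrix.of fun b a => (if b = a then z a else 0) + u a b
  have hU : U.det = 1 := by
    rw [Matrix.det_of_isUpperTriangular]
    · simp only [U, Matrix.of_apply, if_true, hu0 _ _ le_rfl, add_zero, Fin.prod_univ_three, hz]
    · intro b a hba
      simp only [id] at hba
      simp only [U, Matrix.of_apply]
      rw [if_neg hba.ne', hu0 _ _ hba.le, add_zero]
  refine ⟨detAlt.compLinearMap Ψ, ?_, ?_⟩
  · have key : ∀ v : Fin 3 → AA q π m, detAlt.compLinearMap Ψ
        (fun l => (T 1 : LaurentPolynomial ℚ) • v l) = detAlt.compLinearMap Ψ v := by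
      intro v
      simp only [AlternatingMap.compLinearMap_apply]
      rw [detAlt_apply, detAlt_apply]
      have : Matrix.of (fun l => Ψ ((T 1 : LaurentPolynomial ℚ) • v l)) =
          Matrix.of (fun l => Ψ (v l)) * U := by
        ext l a
        simp only [Matrix.of_apply, Matrix.mul_apply, hΨ, hu, U, mul_add, mul_ite, mul_zero,
          Finset.sum_add_distrib, Finset.sum_ite_eq', Finset.mem_univ, if_true]
        rw [mul_comm]
      refine (congrArg Matrix.det this).trans ?_
      rw [Matrix.det_mul, hU, mul_one]
    intro a b d
    rw [← key ![a, b, d]]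
    congr 1
    funext l
    fin_cases l <;> rfl
  · obtain ⟨k, hk⟩ := interp I z
    refine ⟨k, ?_⟩
    rw [AlternatingMap.compLinearMap_apply, detAlt_apply]
    convert hk using 3
    funext l a
    simp only [hΨ]
    split_ifs with hI
    · have : ((T (k l : ℤ) : LaurentPolynomial ℚ) • eta q π m (I l)) (I a)
          = Ideal.Quotient.mk _ (T (k l : ℤ)) := by
        rw [DirectSum.smul_apply, eta, hI, DirectSum.of_eq_same]
        change Ideal.Quotient.mk _ (T (k l : ℤ) * 1) = _
        rw [mul_one]
      rw [hL a _ _ this, tau_T, ← Polynomial.coeff_coe]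
      simp [add_comm, hc]
    · have : ((T (k l : ℤ) : LaurentPolynomial ℚ) • eta q π m (I l)) (I a)
          = Ideal.Quotient.mk _ 0 := by
        rw [DirectSum.smul_apply, eta, DirectSum.of_eq_of_ne _ _ _ (Ne.symm hI)]
        simp
      rw [hL a _ _ this]; simp

theorem wedge3_eq (M : Type) [AddCommGroup M] [Module ℚ M] (a b c : M) :
    wedge3 ℚ M a b c = exteriorPower.ιMulti ℚ 3 ![a, b, c] := rfl

theorem hcal_fwd {M : Type} [AddCommGroup M]
    [Module (LaurentPolynomial ℚ) M] [Module ℚ M] [IsScalarTower ℚ (LaurentPolynomial ℚ) M]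
    (x y w : M) (h : (Submodule.Quotient.mk (wedge3 ℚ M x y w) : Hcal ℚ M) ≠ 0) :
    ∃ D : M [⋀^Fin 3]→ₗ[ℚ] ℚ,
      (∀ a b c : M, D ![(T 1 : LaurentPolynomial ℚ) • a, (T 1 : LaurentPolynomial ℚ) • b,
        (T 1 : LaurentPolynomial ℚ) • c] = D ![a, b, c]) ∧ D ![x, y, w] ≠ 0 := by
  obtain ⟨φ, hφ⟩ : ∃ φ : Module.Dual ℚ (Hcal ℚ M),
      φ (Submodule.Quotient.mk (wedge3 ℚ M x y w)) ≠ 0 := by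
    by_contra! hcon
    exact h ((Module.forall_dual_apply_eq_zero_iff ℚ _).mp hcon)
  refine ⟨exteriorPower.alternatingMapLinearEquiv.symm (φ.comp (wedgeHol ℚ M).mkQ), ?_, ?_⟩
  · intro a b c
    rw [exteriorPower.alternatingMapLinearEquiv_symm_apply,
      exteriorPower.alternatingMapLinearEquiv_symm_apply,
      LinearMap.compAlternatingMap_apply, LinearMap.compAlternatingMap_apply,
      ← wedge3_eq, ← wedge3_eq,
      LinearMap.comp_apply, LinearMap.comp_apply, Submodule.mkQ_apply, Submodule.mkQ_apply]
    congr 1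
    symm
    rw [Submodule.Quotient.eq]
    exact Submodule.subset_span ⟨a, b, c, rfl⟩
  · rw [exteriorPower.alternatingMapLinearEquiv_symm_apply,
      LinearMap.compAlternatingMap_apply, ← wedge3_eq]
    exact hφ

theorem hcal_bwd {M : Type} [AddCommGroup M]
    [Module (LaurentPolynomial ℚ) M] [Module ℚ M] [IsScalarTower ℚ (LaurentPolynomial ℚ) M]
    (x y w : M) (D : M [⋀^Fin 3]→ₗ[ℚ] ℂ)
    (hD : ∀ a b c : M, D ![(T 1 : LaurentPolynomial ℚ) • a, (T 1 : LaurentPolynomial ℚ) • b,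
        (T 1 : LaurentPolynomial ℚ) • c] = D ![a, b, c]) (hne : D ![x, y, w] ≠ 0) :
    (Submodule.Quotient.mk (wedge3 ℚ M x y w) : Hcal ℚ M) ≠ 0 := by
  intro h0
  apply hne
  have hle : wedgeHol ℚ M ≤ LinearMap.ker (exteriorPower.alternatingMapLinearEquiv D) := by
    rw [wedgeHol, Submodule.span_le]
    rintro x ⟨a, b, c, rfl⟩
    rw [SetLike.mem_coe, LinearMap.mem_ker, map_sub, wedge3_eq, wedge3_eq,
      exteriorPower.alternatingMapLinearEquiv_apply_ιMulti,
      exteriorPower.alternatingMapLinearEquiv_apply_ιMulti, hD, sub_self]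
  have := hle ((Submodule.Quotient.mk_eq_zero _).mp h0)
  rwa [LinearMap.mem_ker, wedge3_eq, exteriorPower.alternatingMapLinearEquiv_apply_ιMulti] at this

theorem eta_kill (q : ℕ) (π : Fin q → Polynomial ℚ) (m : Fin q → ℕ) (i : Fin q) :
    Polynomial.toLaurent (π i ^ m i) • eta q π m i = 0 := by
  rw [eta, ← DirectSum.lof_eq_of (LaurentPolynomial ℚ), ← map_smul]
  have : (Polynomial.toLaurent (π i ^ m i)) •
      (1 : LQuot ℚ (Polynomial.toLaurent (π i ^ m i))) = 0 := by
    change Ideal.Quotient.mk _ (Polynomial.toLaurent (π i ^ m i) * 1) = _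
    rw [mul_one, Ideal.Quotient.eq_zero_iff_mem]
    exact Ideal.mem_span_singleton_self _
  rw [this, map_zero]


theorem stmt3 (q : ℕ) (hq : 1 ≤ q) (π : Fin q → Polynomial ℚ)
    (hirr : ∀ i, Irreducible (π i)) (h0 : ∀ i, (π i).eval 0 ≠ 0)
    (m : Fin q → ℕ) (hm : ∀ i, 1 ≤ m i)
    (i₁ i₂ i₃ : Fin q) :
    (Submodule.span ℚ { x : Hcal ℚ (DirectSum (Fin q) (fun i => LQuot ℚ
          (Polynomial.toLaurent (π i ^ m i)))) | ∃ k₁ k₂ k₃ : ℤ,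
        x = Submodule.Quotient.mk (wedge3 ℚ _
          ((T k₁ : LaurentPolynomial ℚ) •
            DirectSum.of (fun i => LQuot ℚ (Polynomial.toLaurent (π i ^ m i))) i₁ 1)
          ((T k₂ : LaurentPolynomial ℚ) •
            DirectSum.of (fun i => LQuot ℚ (Polynomial.toLaurent (π i ^ m i))) i₂ 1)
          ((T k₃ : LaurentPolynomial ℚ) •
            DirectSum.of (fun i => LQuot ℚ (Polynomial.toLaurent (π i ^ m i))) i₃ 1)) } ≠ ⊥)
      ↔ ∃ z₁ z₂ z₃ : ℂ,
        Polynomial.aeval z₁ (π i₁ ^ m i₁) = 0 ∧ Polynomial.aeval z₂ (π i₂ ^ m i₂) = 0 ∧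
        Polynomial.aeval z₃ (π i₃ ^ m i₃) = 0 ∧ z₁ * z₂ * z₃ = 1 ∧
        ∀ j : Fin 3, Nat.card {l : Fin 3 //
            ![i₁, i₂, i₃] l = ![i₁, i₂, i₃] j ∧ ![z₁, z₂, z₃] l = ![z₁, z₂, z₃] j} ≤
          m (![i₁, i₂, i₃] j) := by
  rw [Submodule.ne_bot_iff]
  constructor
  · intro h
    have : ∃ k₁ k₂ k₃ : ℤ, (Submodule.Quotient.mk (wedge3 ℚ (AA q π m)
          ((T k₁ : LaurentPolynomial ℚ) • eta q π m i₁)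
          ((T k₂ : LaurentPolynomial ℚ) • eta q π m i₂)
          ((T k₃ : LaurentPolynomial ℚ) • eta q π m i₃)) : Hcal ℚ (AA q π m)) ≠ 0 := by
      by_contra! hcon
      obtain ⟨x, hx, hx0⟩ := h
      apply hx0
      refine (Submodule.mem_bot ℚ).mp (Submodule.span_le.mpr ?_ hx)
      rintro y ⟨k₁, k₂, k₃, rfl⟩
      exact hcon k₁ k₂ k₃
    obtain ⟨k₁, k₂, k₃, hne⟩ := this
    obtain ⟨D, hD, hDne⟩ := hcal_fwd _ _ _ hne
    exact fwd q π hirr m hm (eta q π m) (eta_kill q π m) i₁ i₂ i₃ D hD k₁ k₂ k₃ hDne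
  · rintro ⟨z₁, z₂, z₃, h₁, h₂, h₃, hz, hcard⟩
    obtain ⟨D, hD, k, hk⟩ := bwd q π m ![i₁, i₂, i₃] ![z₁, z₂, z₃]
      (by intro a; fin_cases a <;> assumption) hz hcard
    have e : (fun l => (T (k l) : LaurentPolynomial ℚ) • eta q π m (![i₁, i₂, i₃] l)) =
      ![(T (k 0) : LaurentPolynomial ℚ) • eta q π m i₁,
        (T (k 1) : LaurentPolynomial ℚ) • eta q π m i₂,
        (T (k 2) : LaurentPolynomial ℚ) • eta q π m i₃] := by
      funext l; fin_cases l <;> rfl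
    rw [e] at hk
    exact ⟨_, Submodule.subset_span ⟨k 0, k 1, k 2, rfl⟩, hcal_bwd _ _ _ D hD hk⟩
end
end

section
/- Let z be a nonzero complex number and m ≥ 1 an integer, and set A = ℂ[t^{±1}]/((t − z)^m). Then ℋ(A) is nonzero if and only if z³ = 1 and m ≥ 3. -/
open LaurentPolynomial TensorProduct

set_option synthInstance.maxHeartbeats 1000000
set_option maxHeartbeats 1000000
noncomputable section

section helpers

variable {M Q : Type} [AddCommGroup M] [Module ℂ M] [AddCommGroup Q] [Module ℂ Q]

lemma tri_add0 (f : M [⋀^Fin 3]→ₗ[ℂ] Q) (a a' b c : M) :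
    f ![a + a', b, c] = f ![a, b, c] + f ![a', b, c] := by
  have h := f.map_update_add ![a, b, c] 0 a a'
  have e : ∀ x, Function.update ![a, b, c] 0 x = ![x, b, c] := by
    intro x; ext i; fin_cases i <;> simp
  simpa only [e] using h

lemma tri_add1 (f : M [⋀^Fin 3]→ₗ[ℂ] Q) (a b b' c : M) :
    f ![a, b + b', c] = f ![a, b, c] + f ![a, b', c] := by
  have h := f.map_update_add ![a, b, c] 1 b b'
  have e : ∀ x, Function.update ![a, b, c] 1 x = ![a, x, c] := by
    intro x; ext i; fin_cases i <;> simp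
  simpa only [e] using h

lemma tri_add2 (f : M [⋀^Fin 3]→ₗ[ℂ] Q) (a b c c' : M) :
    f ![a, b, c + c'] = f ![a, b, c] + f ![a, b, c'] := by
  have h := f.map_update_add ![a, b, c] 2 c c'
  have e : ∀ x, Function.update ![a, b, c] 2 x = ![a, b, x] := by
    intro x; ext i; fin_cases i <;> simp
  simpa only [e] using h

lemma tri_smul0 (f : M [⋀^Fin 3]→ₗ[ℂ] Q) (r : ℂ) (a b c : M) :
    f ![r • a, b, c] = r • f ![a, b, c] := by
  have h := f.map_update_smul ![a, b, c] 0 r a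
  have e : ∀ x, Function.update ![a, b, c] 0 x = ![x, b, c] := by
    intro x; ext i; fin_cases i <;> simp
  simpa only [e] using h

lemma tri_smul1 (f : M [⋀^Fin 3]→ₗ[ℂ] Q) (r : ℂ) (a b c : M) :
    f ![a, r • b, c] = r • f ![a, b, c] := by
  have h := f.map_update_smul ![a, b, c] 1 r b
  have e : ∀ x, Function.update ![a, b, c] 1 x = ![a, x, c] := by
    intro x; ext i; fin_cases i <;> simp
  simpa only [e] using h

lemma tri_smul2 (f : M [⋀^Fin 3]→ₗ[ℂ] Q) (r : ℂ) (a b c : M) :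
    f ![a, b, r • c] = r • f ![a, b, c] := by
  have h := f.map_update_smul ![a, b, c] 2 r c
  have e : ∀ x, Function.update ![a, b, c] 2 x = ![a, b, x] := by
    intro x; ext i; fin_cases i <;> simp
  simpa only [e] using h

lemma tri_zero (f : M [⋀^Fin 3]→ₗ[ℂ] Q) (z : ℂ) (hz : z ^ 3 ≠ 1) (N : M →ₗ[ℂ] M) (m : ℕ)
    (hN : ∀ x, (N ^ m) x = 0)
    (hf : ∀ a b c, f ![a, b, c] = f ![z • a + N a, z • b + N b, z • c + N c])
    (a b c : M) : f ![a, b, c] = 0 := by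
  have hN' : ∀ i, m ≤ i → ∀ x, (N ^ i) x = 0 := by
    intro i hi x
    obtain ⟨k, rfl⟩ := Nat.exists_eq_add_of_le hi
    rw [pow_add, Module.End.mul_apply, hN]
  have key : ∀ d i j k, 3 * m ≤ i + j + k + d → ∀ a b c,
      f ![(N ^ i) a, (N ^ j) b, (N ^ k) c] = 0 := by
    intro d
    induction d with
    | zero =>
      intro i j k h a b c
      rcases (by omega : m ≤ i ∨ m ≤ j ∨ m ≤ k) with h | h | h
      · exact f.map_coord_zero 0 (by simp [hN' i h])
      · exact f.map_coord_zero 1 (by simp [hN' j h])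
      · exact f.map_coord_zero 2 (by simp [hN' k h])
    | succ d ih =>
      intro i j k h a b c
      have h1 := hf ((N ^ i) a) ((N ^ j) b) ((N ^ k) c)
      simp only [← Module.End.mul_apply, ← pow_succ'] at h1
      simp only [tri_add0, tri_add1, tri_add2, tri_smul0, tri_smul1, tri_smul2] at h1
      rw [ih (i+1) j k (by omega), ih i (j+1) k (by omega), ih i j (k+1) (by omega),
        ih (i+1) (j+1) k (by omega), ih (i+1) j (k+1) (by omega), ih i (j+1) (k+1) (by omega),
        ih (i+1) (j+1) (k+1) (by omega)] at h1
      simp only [smul_zero, add_zero, smul_smul] at h1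
      have h2 : (1 - z ^ 3) • f ![(N ^ i) a, (N ^ j) b, (N ^ k) c] = 0 := by
        rw [sub_smul, one_smul, sub_eq_zero]
        convert h1 using 2
        ring
      rcases smul_eq_zero.mp h2 with h3 | h3
      · exact absurd (sub_eq_zero.mp h3).symm hz
      · exact h3
  exact key (3 * m) 0 0 0 (by omega) a b c

lemma tri_small (f : M [⋀^Fin 3]→ₗ[ℂ] Q) (u v : M) (h : ∀ x, ∃ r s : ℂ, x = r • u + s • v)
    (a : Fin 3 → M) : f a = 0 := by
  apply AlternatingMap.map_linearDependent
  intro hl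
  have ht : Submodule.span ℂ (Set.range ![u, v]) = ⊤ := by
    rw [eq_top_iff]
    rintro x -
    obtain ⟨r, s, rfl⟩ := h x
    apply Submodule.add_mem <;> apply Submodule.smul_mem <;> apply Submodule.subset_span
    · exact ⟨0, rfl⟩
    · exact ⟨1, rfl⟩
  have : Module.Finite ℂ M := ⟨⟨(Set.finite_range ![u, v]).toFinset, by simpa using ht⟩⟩
  have h1 := hl.fintype_card_le_finrank
  have h2 := finrank_range_le_card (R := ℂ) ![u, v]
  rw [Set.finrank, ht, finrank_top] at h2
  simp at h1 h2
  omega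

end helpers

lemma Hcal_subsingleton (M : Type) [AddCommGroup M]
    [Module (LaurentPolynomial ℂ) M] [Module ℂ M]
    [IsScalarTower ℂ (LaurentPolynomial ℂ) M]
    (h : ∀ a : Fin 3 → M, (wedgeHol ℂ M).mkQ (exteriorPower.ιMulti ℂ 3 a) = 0) :
    ¬ Nontrivial (Hcal ℂ M) := by
  rw [not_nontrivial_iff_subsingleton, Submodule.Quotient.subsingleton_iff, eq_top_iff,
    ← exteriorPower.ιMulti_span, Submodule.span_le]
  rintro _ ⟨a, rfl⟩
  exact (Submodule.Quotient.mk_eq_zero _).mp (h a)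

lemma wedge_rel (M : Type) [AddCommGroup M]
    [Module (LaurentPolynomial ℂ) M] [Module ℂ M]
    [IsScalarTower ℂ (LaurentPolynomial ℂ) M] (a b c : M) :
    (wedgeHol ℂ M).mkQ (exteriorPower.ιMulti ℂ 3 ![a, b, c]) =
    (wedgeHol ℂ M).mkQ (exteriorPower.ιMulti ℂ 3 ![(T 1 : LaurentPolynomial ℂ) • a,
      (T 1 : LaurentPolynomial ℂ) • b, (T 1 : LaurentPolynomial ℂ) • c]) := by
  rw [← sub_eq_zero, ← map_sub]
  exact (Submodule.Quotient.mk_eq_zero _).mpr (Submodule.subset_span ⟨a, b, c, rfl⟩)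

lemma dir1 (z : ℂ) (m : ℕ) (hz : z ^ 3 ≠ 1) :
    ¬ Nontrivial (Hcal ℂ (LQuot ℂ ((T 1 - C z) ^ m))) := by
  apply Hcal_subsingleton
  intro a
  let N : LQuot ℂ ((T 1 - C z) ^ m) →ₗ[ℂ] LQuot ℂ ((T 1 - C z) ^ m) :=
    LinearMap.mulLeft ℂ (Ideal.Quotient.mk _ (T 1 - C z))
  have hNa : ∀ x, z • x + N x = (T 1 : LaurentPolynomial ℂ) • x := by
    intro x
    obtain ⟨x, rfl⟩ := Ideal.Quotient.mk_surjective x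
    change Ideal.Quotient.mk _ (z • x + (T 1 - C z) * x) = Ideal.Quotient.mk _ (T 1 * x)
    rw [LaurentPolynomial.smul_eq_C_mul]
    ring_nf
  have := tri_zero ((wedgeHol ℂ _).mkQ.compAlternatingMap (exteriorPower.ιMulti ℂ 3)) z hz N m ?_ ?_
    (a 0) (a 1) (a 2)
  · have ea : a = ![a 0, a 1, a 2] := by
      ext i; fin_cases i <;> rfl
    rw [ea]
    exact this
  · intro x
    rw [LinearMap.pow_mulLeft, LinearMap.mulLeft_apply, ← map_pow]
    rw [Ideal.Quotient.eq_zero_iff_mem.mpr (Ideal.mem_span_singleton_self _), zero_mul]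
  · intro a b c
    simp only [hNa]
    exact wedge_rel _ a b c

lemma T_mod (z : ℂ) (hz : z ≠ 0) (n : ℤ) : ∃ (r s : ℂ) (g : LaurentPolynomial ℂ),
    T n = C r + C s * (T 1 - C z) + (T 1 - C z) ^ 2 * g := by
  have hzz : (C z * C z⁻¹ : LaurentPolynomial ℂ) = 1 := by
    rw [← map_mul, mul_inv_cancel₀ hz, map_one]
  have hT : (T 1 * T (-1) : LaurentPolynomial ℂ) = 1 := by
    rw [← T_add]; simp
  induction n using Int.induction_on with
  | zero => exact ⟨1, 0, 0, by simp⟩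
  | succ n ih =>
    obtain ⟨r, s, g, h⟩ := ih
    refine ⟨z * r, r + z * s, T 1 * g + C s, ?_⟩
    rw [T_add, h]
    simp only [map_mul, map_add]
    ring
  | pred n ih =>
    obtain ⟨r, s, g, h⟩ := ih
    refine ⟨z⁻¹ * r, z⁻¹ * s - z⁻¹ * z⁻¹ * r,
      T (-1) * g - C (z⁻¹ * z⁻¹) * C s + T (-1) * C (z⁻¹ * z⁻¹) * (C r + C s * (T 1 - C z)), ?_⟩
    rw [sub_eq_add_neg, T_add, h]
    simp only [map_mul, map_sub]
    set t : LaurentPolynomial ℂ := T 1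
    set t' : LaurentPolynomial ℂ := T (-1)
    set w : LaurentPolynomial ℂ := C z
    set w' : LaurentPolynomial ℂ := C z⁻¹
    have e : t' = w' * w' * (2 * w - t) + w' * w' * t' * (t - w) ^ 2 := by
      linear_combination (t' * w * w' + t') * (-hzz) + (2 * w * w' ^ 2 - t * w' ^ 2) * hT
    linear_combination (C r + C s * (t - w)) * e + (C r * w' + C s * t * w' - C s * w * w') * hzz

lemma L_mod (z : ℂ) (hz : z ≠ 0) (p : LaurentPolynomial ℂ) :
    ∃ (r s : ℂ) (g : LaurentPolynomial ℂ),
    p = C r + C s * (T 1 - C z) + (T 1 - C z) ^ 2 * g := by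
  induction p using LaurentPolynomial.induction_on' with
  | add p q hp hq =>
    obtain ⟨r, s, g, h⟩ := hp
    obtain ⟨r', s', g', h'⟩ := hq
    refine ⟨r + r', s + s', g + g', ?_⟩
    rw [h, h']; simp only [map_add]; ring
  | C_mul_T n a =>
    obtain ⟨r, s, g, h⟩ := T_mod z hz n
    refine ⟨a * r, a * s, C a * g, ?_⟩
    rw [h]; simp only [map_mul]; ring

lemma dir2 (z : ℂ) (hz : z ≠ 0) (m : ℕ) (hm : m ≤ 2) :
    ¬ Nontrivial (Hcal ℂ (LQuot ℂ ((T 1 - C z) ^ m))) := by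
  apply Hcal_subsingleton
  intro a
  refine tri_small ((wedgeHol ℂ _).mkQ.compAlternatingMap (exteriorPower.ιMulti ℂ 3))
    (Ideal.Quotient.mk _ 1) (Ideal.Quotient.mk _ (T 1 - C z)) ?_ a
  intro x
  obtain ⟨x, rfl⟩ := Ideal.Quotient.mk_surjective x
  obtain ⟨r, s, g, h⟩ := L_mod z hz x
  refine ⟨r, s, ?_⟩
  change Ideal.Quotient.mk _ x = Ideal.Quotient.mk _ (r • 1 + s • (T 1 - C z))
  rw [Ideal.Quotient.eq, Ideal.mem_span_singleton, h, LaurentPolynomial.smul_eq_C_mul,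
    LaurentPolynomial.smul_eq_C_mul]
  refine Dvd.dvd.trans (pow_dvd_pow _ hm) ⟨g, ?_⟩
  ring

lemma isUnit_zX (z : ℂ) (hz : z ≠ 0) :
    IsUnit (PowerSeries.C z + PowerSeries.X : PowerSeries ℂ) := by
  rw [PowerSeries.isUnit_iff_constantCoeff]
  simpa using hz

/-- Taylor expansion at `z`. -/
def tay (z : ℂ) (hz : z ≠ 0) : LaurentPolynomial ℂ →+* PowerSeries ℂ :=
  LaurentPolynomial.eval₂ (PowerSeries.C (R := ℂ)) (isUnit_zX z hz).unit

lemma tay_T (z : ℂ) (hz : z ≠ 0) : tay z hz (T 1) = PowerSeries.C z + PowerSeries.X := by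
  simp [tay]

lemma tay_C (z : ℂ) (hz : z ≠ 0) (a : ℂ) : tay z hz (C a) = PowerSeries.C a := by
  simp [tay]

/-- The first three Taylor coefficients. -/
def tayL (z : ℂ) (hz : z ≠ 0) : LaurentPolynomial ℂ →ₗ[ℂ] (Fin 3 → ℂ) where
  toFun p i := PowerSeries.coeff (i : ℕ) (tay z hz p)
  map_add' p q := by ext i; simp
  map_smul' a p := by
    ext i
    rw [LaurentPolynomial.smul_eq_C_mul, map_mul, tay_C]; simp

/-- The induced map on the quotient. -/
def tayQ (z : ℂ) (hz : z ≠ 0) (m : ℕ) (hm : 3 ≤ m) :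
    LQuot ℂ ((T 1 - C z) ^ m) →ₗ[ℂ] (Fin 3 → ℂ) :=
  Submodule.liftQ ((Ideal.span {((T 1 - C z) ^ m : LaurentPolynomial ℂ)}).restrictScalars ℂ)
    (tayL z hz) (by
      intro p hp
      obtain ⟨g, rfl⟩ := Ideal.mem_span_singleton.mp hp
      rw [LinearMap.mem_ker]
      ext i
      change PowerSeries.coeff (i : ℕ) (tay z hz _) = 0
      rw [map_mul, map_pow, map_sub, tay_T, tay_C, add_sub_cancel_left,
        PowerSeries.coeff_X_pow_mul']
      rw [if_neg (by omega)])

lemma tayQ_mk (z : ℂ) (hz : z ≠ 0) (m : ℕ) (hm : 3 ≤ m) (p : LaurentPolynomial ℂ) (i : Fin 3) :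
    tayQ z hz m hm (Ideal.Quotient.mk _ p) i = PowerSeries.coeff (i : ℕ) (tay z hz p) := rfl

lemma tayQ_T (z : ℂ) (hz : z ≠ 0) (m : ℕ) (hm : 3 ≤ m) (x : LQuot ℂ ((T 1 - C z) ^ m)) :
    tayQ z hz m hm ((T 1 : LaurentPolynomial ℂ) • x) =
      ![z * tayQ z hz m hm x 0, z * tayQ z hz m hm x 1 + tayQ z hz m hm x 0,
        z * tayQ z hz m hm x 2 + tayQ z hz m hm x 1] := by
  obtain ⟨x, rfl⟩ := Ideal.Quotient.mk_surjective x
  have e : (T 1 : LaurentPolynomial ℂ) •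
      (Ideal.Quotient.mk (Ideal.span {((T 1 - C z) ^ m : LaurentPolynomial ℂ)}) x) =
      Ideal.Quotient.mk _ (T 1 * x) := rfl
  rw [e]
  ext i
  rw [tayQ_mk, map_mul, tay_T, add_mul, map_add, PowerSeries.coeff_C_mul]
  fin_cases i
  · simp [tayQ_mk]
  · have := PowerSeries.coeff_succ_X_mul 0 (tay z hz x)
    simp [tayQ_mk, this]
  · have := PowerSeries.coeff_succ_X_mul 1 (tay z hz x)
    simp [tayQ_mk, this]

lemma dir3 (z : ℂ) (hz : z ≠ 0) (h3 : z ^ 3 = 1) (m : ℕ) (hm : 3 ≤ m) :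
    Nontrivial (Hcal ℂ (LQuot ℂ ((T 1 - C z) ^ m))) := by
  rw [Submodule.Quotient.nontrivial_iff]
  intro htop
  let D : (LQuot ℂ ((T 1 - C z) ^ m)) [⋀^Fin 3]→ₗ[ℂ] ℂ :=
    (Matrix.detRowAlternating (R := ℂ) (n := Fin 3)).compLinearMap (tayQ z hz m hm)
  have hD : ∀ a, D a = Matrix.det (Matrix.of fun i => tayQ z hz m hm (a i)) := fun a => rfl
  let F := exteriorPower.alternatingMapLinearEquiv D
  have hF : ∀ a, F (exteriorPower.ιMulti ℂ 3 a) = D a :=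
    fun a => exteriorPower.alternatingMapLinearEquiv_apply_ιMulti D a
  have hle : wedgeHol ℂ (LQuot ℂ ((T 1 - C z) ^ m)) ≤ LinearMap.ker F := by
    rw [wedgeHol, Submodule.span_le]
    rintro _ ⟨a, b, c, rfl⟩
    change F (exteriorPower.ιMulti ℂ 3 _ - exteriorPower.ιMulti ℂ 3 _) = 0
    rw [map_sub, hF, hF, hD, hD, Matrix.det_fin_three, Matrix.det_fin_three]
    simp [tayQ_T]
    set p := tayQ z hz m hm a
    set q := tayQ z hz m hm b
    set r := tayQ z hz m hm c
    linear_combination (-(p 0 * q 1 * r 2 - p 0 * q 2 * r 1 - p 1 * q 0 * r 2 + p 1 * q 2 * r 0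
      + p 2 * q 0 * r 1 - p 2 * q 1 * r 0)) * h3
  rw [htop, top_le_iff, LinearMap.ker_eq_top] at hle
  have hk : ∀ (k : ℕ) (i : Fin 3), tayQ z hz m hm (Ideal.Quotient.mk _ ((T 1 - C z) ^ k)) i =
      if (i : ℕ) = k then 1 else 0 := by
    intro k i
    rw [tayQ_mk, map_pow, map_sub, tay_T, tay_C, add_sub_cancel_left, PowerSeries.coeff_X_pow]
  have h1 := hF ![Ideal.Quotient.mk _ ((T 1 - C z) ^ 0), Ideal.Quotient.mk _ ((T 1 - C z) ^ 1),
    Ideal.Quotient.mk _ ((T 1 - C z) ^ 2)]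
  rw [hle, hD, Matrix.det_fin_three] at h1
  simp only [Matrix.of_apply, Matrix.cons_val, hk] at h1
  simp at h1

theorem stmt4 (z : ℂ) (hz : z ≠ 0) (m : ℕ) (hm : 1 ≤ m) :
    Nontrivial (Hcal ℂ (LQuot ℂ ((T 1 - C z) ^ m))) ↔ z ^ 3 = 1 ∧ 3 ≤ m := by
  constructor
  · intro h
    constructor
    · by_contra hz3
      exact dir1 z m hz3 h
    · by_contra hm3
      exact dir2 z hz m (by omega) h
  · rintro ⟨h3, hm3⟩
    exact dir3 z hz h3 m hm3
end
end

section
/- Let z be a complex number with z³ = 1 and let m ≥ 1 be an integer, and set A = ℂ[t^{±1}]/((t − z)^m). Then the complex dimension of ℋ(A) is at most (m − 1)(m − 2)/2. -/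
open LaurentPolynomial TensorProduct

set_option synthInstance.maxHeartbeats 1000000
set_option maxHeartbeats 1000000
noncomputable section

lemma hcal_rank_aux (K : Type) [Field K] (M : Type) [AddCommGroup M]
    [Module (LaurentPolynomial K) M] [Module K M]
    [IsScalarTower K (LaurentPolynomial K) M] (b : ℕ → M) (n : ℕ)
    (hspan : ∀ x : M, x ∈ Submodule.span K (b '' Set.Iio (n + 1)))
    (hcyc : ∀ x : M, ∃ p : LaurentPolynomial K, x = p • b 0) :
    Module.rank K (Hcal K M) ≤ (n * (n - 1) / 2 : ℕ) := by
  classical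
  let f : M [⋀^Fin 3]→ₗ[K] Hcal K M :=
    (wedgeHol K M).mkQ.compAlternatingMap (exteriorPower.ιMulti K 3)
  have hf : ∀ x y w, f ![x, y, w] = (wedgeHol K M).mkQ (wedge3 K M x y w) := fun x y w => rfl
  have hT : ∀ x y w, f ![(T 1 : LaurentPolynomial K) • x, (T 1 : LaurentPolynomial K) • y,
      (T 1 : LaurentPolynomial K) • w] = f ![x, y, w] := by
    intro x y w
    rw [hf, hf]
    refine Eq.symm ?_
    rw [← sub_eq_zero, ← map_sub, Submodule.mkQ_apply, Submodule.Quotient.mk_eq_zero]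
    exact Submodule.subset_span ⟨x, y, w, rfl⟩
  -- linearity in each slot
  have l1 : ∀ y w, ∃ g : M →ₗ[K] Hcal K M, ∀ x, g x = f ![x, y, w] := by
    intro y w
    refine ⟨f.toMultilinearMap.toLinearMap ![0, y, w] 0, fun x => ?_⟩
    refine congrArg f ?_
    funext k
    fin_cases k <;> simp
  have l2 : ∀ x w, ∃ g : M →ₗ[K] Hcal K M, ∀ y, g y = f ![x, y, w] := by
    intro x w
    refine ⟨f.toMultilinearMap.toLinearMap ![x, 0, w] 1, fun y => ?_⟩
    refine congrArg f ?_
    funext k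
    fin_cases k <;> simp
  have l3 : ∀ x y, ∃ g : M →ₗ[K] Hcal K M, ∀ w, g w = f ![x, y, w] := by
    intro x y
    refine ⟨f.toMultilinearMap.toLinearMap ![x, y, 0] 2, fun w => ?_⟩
    refine congrArg f ?_
    funext k
    fin_cases k <;> simp
  let s : Finset (Hcal K M) :=
    ((Finset.range n).sigma (fun k => Finset.range k)).image
      (fun p => f ![b 0, b (p.2 + 1), b (p.1 + 1)])
  have hs : s.card ≤ n * (n - 1) / 2 := by
    refine Finset.card_image_le.trans ?_
    rw [Finset.card_sigma]
    simp [Finset.sum_range_id]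
  let W : Submodule K (Hcal K M) := Submodule.span K (s : Set (Hcal K M))
  -- basic elements
  have hlt : ∀ i j, i < j → j < n + 1 → f ![b 0, b i, b j] ∈ W := by
    intro i j hij hj
    rcases i with _ | i
    · rw [f.map_eq_zero_of_eq (i := 0) (j := 1) _ (by simp) (by decide)]
      exact W.zero_mem
    · rcases j with _ | j
      · omega
      · refine Submodule.subset_span ?_
        refine Finset.mem_coe.2 (Finset.mem_image.2 ⟨⟨j, i⟩, ?_, rfl⟩)
        simp only [Finset.mem_sigma, Finset.mem_range]
        omega
  have hij : ∀ i j, i < n + 1 → j < n + 1 → f ![b 0, b i, b j] ∈ W := by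
    intro i j hi hj
    rcases lt_trichotomy i j with h | h | h
    · exact hlt i j h hj
    · subst h
      rw [f.map_eq_zero_of_eq (i := 1) (j := 2) _ (by simp) (by decide)]
      exact W.zero_mem
    · have := f.map_swap ![b 0, b i, b j] (i := 1) (j := 2) (by decide)
      have h2 : (![b 0, b i, b j] ∘ Equiv.swap (1 : Fin 3) 2) = ![b 0, b j, b i] := by
        funext k
        fin_cases k <;> rfl
      rw [h2] at this
      rw [← neg_neg (f ![b 0, b i, b j]), ← this]
      exact W.neg_mem (hlt j i h hi)
  have key : ∀ (g : M →ₗ[K] Hcal K M), (∀ i, i < n + 1 → g (b i) ∈ W) → ∀ x, g x ∈ W := by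
    intro g hg x
    have : Submodule.span K (b '' Set.Iio (n + 1)) ≤ W.comap g := by
      rw [Submodule.span_le]
      rintro _ ⟨i, hi, rfl⟩
      exact hg i hi
    exact this (hspan x)
  have h0 : ∀ y w, f ![b 0, y, w] ∈ W := by
    intro y w
    obtain ⟨g, hg⟩ := l2 (b 0) w
    rw [← hg]
    refine key g (fun i hi => ?_) y
    rw [hg]
    obtain ⟨g', hg'⟩ := l3 (b 0) (b i)
    rw [← hg']
    refine key g' (fun j hj => ?_) w
    rw [hg']
    exact hij i j hi hj
  have hTT : ∀ x : M, (T 1 : LaurentPolynomial K) • (T (-1) : LaurentPolynomial K) • x = x := by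
    intro x
    rw [smul_smul, ← T_add]
    simp
  have hTT' : ∀ x : M, (T (-1) : LaurentPolynomial K) • (T 1 : LaurentPolynomial K) • x = x := by
    intro x
    rw [smul_smul, ← T_add]
    simp
  have hpow : ∀ k : ℤ, ∀ y w, f ![(T k : LaurentPolynomial K) • b 0, y, w] ∈ W := by
    intro k
    induction k using Int.induction_on with
    | zero => simpa using h0
    | succ i ih =>
      intro y w
      have := hT ((T (i : ℤ) : LaurentPolynomial K) • b 0) ((T (-1) : LaurentPolynomial K) • y)
        ((T (-1) : LaurentPolynomial K) • w)
      rw [hTT, hTT, smul_smul, ← T_add, add_comm] at this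
      rw [this]
      exact ih _ _
    | pred i ih =>
      intro y w
      have := hT ((T (-(i : ℤ) - 1) : LaurentPolynomial K) • b 0) y w
      rw [smul_smul, ← T_add, add_sub_cancel] at this
      rw [← this]
      exact ih _ _
  have hall : ∀ x y w, f ![x, y, w] ∈ W := by
    intro x y w
    obtain ⟨g, hg⟩ := l1 y w
    obtain ⟨p, rfl⟩ := hcyc x
    rw [← hg]
    induction p using LaurentPolynomial.induction_on' with
    | add p q hp hq => rw [add_smul, map_add]; exact W.add_mem hp hq
    | C_mul_T k a =>
      have : (C a * T k : LaurentPolynomial K) • b 0 = a • ((T k : LaurentPolynomial K) • b 0) := by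
        rw [← smul_assoc, LaurentPolynomial.smul_eq_C_mul]
      rw [this, map_smul, hg]
      exact W.smul_mem _ (hpow k y w)
  have htop : W = ⊤ := by
    have h1 : Submodule.map (wedgeHol K M).mkQ
        (Submodule.span K (Set.range (exteriorPower.ιMulti K 3 (M := M)))) ≤ W := by
      rw [Submodule.map_span, Submodule.span_le]
      rintro _ ⟨_, ⟨v, rfl⟩, rfl⟩
      have := hall (v 0) (v 1) (v 2)
      have hv : ![v 0, v 1, v 2] = v := by
        funext k
        fin_cases k <;> rfl
      rw [hv] at this
      exact this
    rw [exteriorPower.ιMulti_span, Submodule.map_top, Submodule.range_mkQ] at h1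
    exact top_le_iff.1 h1
  rw [← rank_top, ← htop]
  refine (rank_span_finset_le s).trans ?_
  exact_mod_cast hs

theorem stmt5 (z : ℂ) (hz : z ^ 3 = 1) (m : ℕ) (hm : 1 ≤ m) :
    Module.rank ℂ (Hcal ℂ (LQuot ℂ ((T 1 - C z) ^ m))) ≤ ((m - 1) * (m - 2) / 2 : ℕ) := by
  set u : LaurentPolynomial ℂ := T 1 - C z with hu
  let π : LaurentPolynomial ℂ →ₗ[ℂ] LQuot ℂ (u ^ m) :=
    (Ideal.Quotient.mkₐ ℂ (Ideal.span {u ^ m})).toLinearMap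
  have hπs : ∀ x, ∃ p, x = π p := fun x => by
    obtain ⟨p, hp⟩ := Ideal.Quotient.mk_surjective x
    exact ⟨p, hp.symm⟩
  have hπ : ∀ p q, π (p * q) = p • π q := fun p q => rfl
  have hπu : π (u ^ m) = 0 :=
    Ideal.Quotient.eq_zero_iff_mem.2 (Ideal.mem_span_singleton_self _)
  have := hcal_rank_aux ℂ (LQuot ℂ (u ^ m)) (fun i => π (u ^ i)) (m - 1) ?_ ?_
  · rwa [Nat.sub_sub] at this
  · rw [Nat.sub_add_cancel hm]
    set S := Submodule.span ℂ ((fun i => π (u ^ i)) '' Set.Iio m) with hS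
    have hfin : Module.Finite ℂ S := Module.Finite.span_of_finite ℂ ((Set.finite_Iio m).image _)
    have hT : ∀ x ∈ S, (T 1 : LaurentPolynomial ℂ) • x ∈ S := by
      intro x hx
      induction hx using Submodule.span_induction with
      | mem x hx =>
        obtain ⟨i, hi, rfl⟩ := hx
        have e : (T 1 : LaurentPolynomial ℂ) = u + C z := by rw [hu]; ring
        have e2 : (T 1 : LaurentPolynomial ℂ) • π (u ^ i) = π (u ^ (i + 1)) + z • π (u ^ i) := by
          rw [← hπ, e, add_mul, map_add, ← LaurentPolynomial.smul_eq_C_mul, map_smul, pow_succ']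
        simp only [e2]
        refine S.add_mem ?_ (S.smul_mem _ (Submodule.subset_span ⟨i, hi, rfl⟩))
        rcases Nat.lt_or_ge (i + 1) m with h | h
        · exact Submodule.subset_span ⟨i + 1, h, rfl⟩
        · have : i + 1 = m := le_antisymm hi h
          rw [this, hπu]
          exact S.zero_mem
      | zero => simp
      | add x y _ _ hx hy => rw [smul_add]; exact S.add_mem hx hy
      | smul a x _ hx => rw [smul_comm]; exact S.smul_mem _ hx
    have hTT : ∀ x : LQuot ℂ (u ^ m),
        (T (-1) : LaurentPolynomial ℂ) • (T 1 : LaurentPolynomial ℂ) • x = x := by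
      intro x
      rw [smul_smul, ← T_add]
      simp
    have hTi : ∀ x ∈ S, (T (-1) : LaurentPolynomial ℂ) • x ∈ S := by
      let F : S →ₗ[ℂ] S :=
        { toFun := fun x => ⟨(T 1 : LaurentPolynomial ℂ) • x.1, hT x.1 x.2⟩
          map_add' := fun x y => Subtype.ext (smul_add _ _ _)
          map_smul' := fun a x => Subtype.ext (smul_comm _ _ _) }
      have hF : Function.Injective F := by
        intro x y h
        have h' : (T 1 : LaurentPolynomial ℂ) • x.1 = (T 1 : LaurentPolynomial ℂ) • y.1 :=
          congrArg Subtype.val h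
        apply Subtype.ext
        rw [← hTT x.1, h', hTT]
      intro x hx
      obtain ⟨y, hy⟩ := (LinearMap.injective_iff_surjective.1 hF) ⟨x, hx⟩
      have h' : (T 1 : LaurentPolynomial ℂ) • y.1 = x := congrArg Subtype.val hy
      rw [← h', hTT]
      exact y.2
    have h1 : π 1 ∈ S := Submodule.subset_span ⟨0, hm, by simp⟩
    have hk : ∀ k : ℤ, π (T k) ∈ S := by
      intro k
      induction k using Int.induction_on with
      | zero => simpa using h1
      | succ i ih => rw [add_comm, T_add, hπ]; exact hT _ ih
      | pred i ih => rw [sub_eq_neg_add, T_add, hπ]; exact hTi _ ih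
    intro x
    obtain ⟨p, rfl⟩ := hπs x
    induction p using LaurentPolynomial.induction_on' with
    | add p q hp hq => rw [map_add]; exact S.add_mem hp hq
    | C_mul_T k a =>
      rw [← LaurentPolynomial.smul_eq_C_mul, map_smul]
      exact S.smul_mem _ (hk k)
  · intro x
    obtain ⟨p, rfl⟩ := hπs x
    exact ⟨p, by simp only [pow_zero]; rw [← hπ, mul_one]⟩
end
end

section
/- Let z, w be nonzero complex numbers and m, n ≥ 1 integers. Set A = ℂ[t^{±1}]/((t − z)^m) and B = ℂ[t^{±1}]/((t − w)^n), and let W be the quotient of (Λ²_ℂ A) ⊗_ℂ B by the ℂ-subspace spanned by all elements (α∧α')⊗β − (tα∧tα')⊗tβ with α, α' ∈ A and β ∈ B. Then W is nonzero if and only if z²w = 1 and m ≥ 2. -/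
open LaurentPolynomial TensorProduct

set_option synthInstance.maxHeartbeats 1000000
set_option maxHeartbeats 1000000
noncomputable section

/-- The wedge `a ∧ b` as an element of the second exterior power. -/
def wedge2 (K : Type) [Field K] (M : Type) [AddCommGroup M] [Module K M] (a b : M) :
    ⋀[K]^2 M :=
  ⟨ExteriorAlgebra.ιMulti K 2 ![a, b],
    ExteriorAlgebra.ιMulti_range K 2 (Set.mem_range_self _)⟩

/-- The subspace of `(Λ² A) ⊗ B` spanned by the elements
`(α ∧ α') ⊗ β - (tα ∧ tα') ⊗ tβ`. -/
def w2Hol (K : Type) [Field K] (A B : Type) [AddCommGroup A] [AddCommGroup B]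
    [Module (LaurentPolynomial K) A] [Module (LaurentPolynomial K) B]
    [Module K A] [Module K B]
    [IsScalarTower K (LaurentPolynomial K) A] [IsScalarTower K (LaurentPolynomial K) B] :
    Submodule K (↥(⋀[K]^2 A) ⊗[K] B) :=
  Submodule.span K { x | ∃ (a a' : A) (b : B),
    x = (wedge2 K A a a') ⊗ₜ[K] b -
      (wedge2 K A ((T 1 : LaurentPolynomial K) • a) ((T 1 : LaurentPolynomial K) • a')) ⊗ₜ[K]
        ((T 1 : LaurentPolynomial K) • b) }

/-- The quotient `W` of `(Λ² A) ⊗ B` by the span of the elements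
`(α ∧ α') ⊗ β - (tα ∧ tα') ⊗ tβ`. -/
abbrev w2Quot (K : Type) [Field K] (A B : Type) [AddCommGroup A] [AddCommGroup B]
    [Module (LaurentPolynomial K) A] [Module (LaurentPolynomial K) B]
    [Module K A] [Module K B]
    [IsScalarTower K (LaurentPolynomial K) A] [IsScalarTower K (LaurentPolynomial K) B] :
    Type :=
  @HasQuotient.Quotient _ _ (Submodule.hasQuotient (R := K) (M := ↥(⋀[K]^2 A) ⊗[K] B))
    (w2Hol K A B)

section helpers
variable {K : Type} [Field K] {A B : Type} [AddCommGroup A] [AddCommGroup B]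
    [Module (LaurentPolynomial K) A] [Module (LaurentPolynomial K) B]
    [Module K A] [Module K B]
    [IsScalarTower K (LaurentPolynomial K) A] [IsScalarTower K (LaurentPolynomial K) B]

lemma wedge2_coe (a b : A) : ((wedge2 K A a b : ⋀[K]^2 A) : ExteriorAlgebra K A) =
    ExteriorAlgebra.ι K a * ExteriorAlgebra.ι K b := by
  simp [wedge2, ExteriorAlgebra.ιMulti_apply]

lemma wedge2_add_left (a a' b : A) :
    wedge2 K A (a + a') b = wedge2 K A a b + wedge2 K A a' b := by
  apply Subtype.ext; simp [wedge2_coe, add_mul]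

lemma wedge2_add_right (a b b' : A) :
    wedge2 K A a (b + b') = wedge2 K A a b + wedge2 K A a b' := by
  apply Subtype.ext; simp [wedge2_coe, mul_add]

lemma wedge2_smul_left (c : K) (a b : A) :
    wedge2 K A (c • a) b = c • wedge2 K A a b := by
  apply Subtype.ext; simp [wedge2_coe]

lemma wedge2_smul_right (c : K) (a b : A) :
    wedge2 K A a (c • b) = c • wedge2 K A a b := by
  apply Subtype.ext; simp [wedge2_coe]

lemma wedge2_self (a : A) : wedge2 K A a a = 0 := by
  apply Subtype.ext; simp [wedge2_coe]

/-- the class of a pure tensor -/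
def clsF (a a' : A) (b : B) : w2Quot K A B :=
  Submodule.mkQ (R := K) (M := ↥(⋀[K]^2 A) ⊗[K] B) (w2Hol K A B) ((wedge2 K A a a') ⊗ₜ[K] b)

lemma clsF_inv (a a' : A) (b : B) :
    clsF (K := K) ((T 1 : LaurentPolynomial K) • a) ((T 1 : LaurentPolynomial K) • a')
      ((T 1 : LaurentPolynomial K) • b) = clsF (K := K) a a' b := by
  symm
  unfold clsF
  rw [← sub_eq_zero, ← map_sub, Submodule.mkQ_apply, Submodule.Quotient.mk_eq_zero]
  exact Submodule.subset_span ⟨a, a', b, rfl⟩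

lemma subsingleton_of_clsF (h : ∀ (a a' : A) (b : B), clsF (K := K) a a' b = 0) :
    Subsingleton (w2Quot K A B) := by
  refine (Submodule.Quotient.subsingleton_iff (R := K) (M := ↥(⋀[K]^2 A) ⊗[K] B)).mpr ?_
  rw [eq_top_iff]
  intro x _
  induction x using TensorProduct.induction_on with
  | zero => exact zero_mem _
  | add x y hx hy => exact add_mem (hx trivial) (hy trivial)
  | tmul x b =>
    have hx : x ∈ Submodule.span K (Set.range (exteriorPower.ιMulti K 2 (M := A))) := by
      rw [exteriorPower.ιMulti_span]; trivial
    induction hx using Submodule.span_induction with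
    | zero => rw [TensorProduct.zero_tmul]; exact zero_mem _
    | add x y _ _ hx hy => rw [TensorProduct.add_tmul]; exact add_mem (hx trivial) (hy trivial)
    | smul c x _ hx => rw [← TensorProduct.smul_tmul']; exact Submodule.smul_mem _ c (hx trivial)
    | mem x hx =>
      obtain ⟨v, rfl⟩ := hx
      have := h (v 0) (v 1) b
      unfold clsF at this
      rw [Submodule.mkQ_apply, Submodule.Quotient.mk_eq_zero] at this
      convert this using 2
      apply Subtype.ext
      simp [wedge2_coe, ExteriorAlgebra.ιMulti_apply]
      rfl

/-- `t - z` acting -/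
def xop (K : Type) [Field K] {A : Type} [AddCommGroup A] [Module (LaurentPolynomial K) A]
    [Module K A] (z : K) (a : A) : A := (T 1 : LaurentPolynomial K) • a - z • a

lemma T_eq_xop (z : K) (a : A) : (T 1 : LaurentPolynomial K) • a = z • a + xop K z a := by
  simp [xop]

lemma clsF_expand (z w : K) (a a' : A) (b : B) :
    clsF (K := K) a a' b = (z ^ 2 * w) • clsF (K := K) a a' b
      + (z ^ 2) • clsF (K := K) a a' (xop K w b)
      + (z * w) • clsF (K := K) a (xop K z a') b
      + z • clsF (K := K) a (xop K z a') (xop K w b)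
      + (z * w) • clsF (K := K) (xop K z a) a' b
      + z • clsF (K := K) (xop K z a) a' (xop K w b)
      + w • clsF (K := K) (xop K z a) (xop K z a') b
      + clsF (K := K) (xop K z a) (xop K z a') (xop K w b) := by
  conv_lhs => rw [← clsF_inv]
  rw [T_eq_xop z a, T_eq_xop z a', T_eq_xop w b]
  unfold clsF
  simp only [wedge2_add_left, wedge2_add_right, wedge2_smul_left, wedge2_smul_right,
    TensorProduct.add_tmul, TensorProduct.tmul_add, map_add, map_smul,
    ← TensorProduct.smul_tmul', TensorProduct.tmul_smul, smul_smul, smul_add]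
  module

lemma clsF_zero_of_nilp (z w : K) (m n : ℕ) (hA : ∀ a : A, (xop K z)^[m] a = 0)
    (hB : ∀ b : B, (xop K w)^[n] b = 0) (h : z ^ 2 * w ≠ 1) (a a' : A) (b : B) :
    clsF (K := K) a a' b = 0 := by
  have hx0 : ∀ {A : Type} [AddCommGroup A] [Module (LaurentPolynomial K) A] [Module K A] (z : K)
      (k : ℕ), (xop K z)^[k] (0 : A) = 0 := by
    intro A _ _ _ z k
    exact Function.iterate_fixed (by simp [xop]) k
  have hA' : ∀ i, m ≤ i → ∀ a : A, (xop K z)^[i] a = 0 := by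
    intro i hi a
    obtain ⟨k, rfl⟩ := Nat.exists_eq_add_of_le' hi
    rw [Function.iterate_add_apply, hA, hx0]
  have hB' : ∀ i, n ≤ i → ∀ a : B, (xop K w)^[i] a = 0 := by
    intro i hi a
    obtain ⟨k, rfl⟩ := Nat.exists_eq_add_of_le' hi
    rw [Function.iterate_add_apply, hB, hx0]
  have z1 : ∀ (a' : A) (b : B), clsF (K := K) 0 a' b = 0 := by
    intro a' b
    have : wedge2 K A 0 a' = 0 := by simpa using wedge2_smul_left (0 : K) 0 a'
    simp [clsF, this]
  have z2 : ∀ (a : A) (b : B), clsF (K := K) a 0 b = 0 := by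
    intro a b
    have : wedge2 K A a 0 = 0 := by simpa using wedge2_smul_right (0 : K) a 0
    simp [clsF, this]
  have z3 : ∀ (a a' : A), clsF (K := K) a a' (0 : B) = 0 := by
    intro a a'; simp [clsF]
  have key : ∀ N i j k : ℕ, 2 * m + n ≤ i + j + k + N → 
      clsF (K := K) ((xop K z)^[i] a) ((xop K z)^[j] a') ((xop K w)^[k] b) = 0 := by
    intro N
    induction N with
    | zero =>
      intro i j k hle
      by_cases hi : m ≤ i
      · rw [hA' i hi, z1]
      by_cases hj : m ≤ j
      · rw [hA' j hj, z2]
      rw [hB' k (by omega), z3]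
    | succ N ih =>
      intro i j k hle
      have e := clsF_expand z w ((xop K z)^[i] a) ((xop K z)^[j] a') ((xop K w)^[k] b)
      simp only [← Function.iterate_succ_apply'] at e
      rw [ih i j (k+1) (by omega), ih i (j+1) k (by omega), ih i (j+1) (k+1) (by omega),
        ih (i+1) j k (by omega), ih (i+1) j (k+1) (by omega), ih (i+1) (j+1) k (by omega),
        ih (i+1) (j+1) (k+1) (by omega)] at e
      simp only [smul_zero, add_zero] at e
      have e2 : (1 - z ^ 2 * w) •
          clsF (K := K) ((xop K z)^[i] a) ((xop K z)^[j] a') ((xop K w)^[k] b) = 0 := by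
        rw [sub_smul, one_smul, ← e, sub_self]
      exact (smul_eq_zero.mp e2).resolve_left (sub_ne_zero.mpr (Ne.symm h))
  exact key (2 * m + n) 0 0 0 (by omega)

lemma nontrivial_of_func (z w : K) (h : z ^ 2 * w = 1) (e d : A →ₗ[K] K) (g : B →ₗ[K] K)
    (he : ∀ a, e ((T 1 : LaurentPolynomial K) • a) = z * e a)
    (hd : ∀ a, d ((T 1 : LaurentPolynomial K) • a) = e a + z * d a)
    (hg : ∀ b, g ((T 1 : LaurentPolynomial K) • b) = w * g b)
    (a a' : A) (b : B) (hne : (e a * d a' - d a * e a') * g b ≠ 0) :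
    Nontrivial (w2Quot K A B) := by
  let f : A [⋀^Fin 2]→ₗ[K] K :=
    (Matrix.detRowAlternating (n := Fin 2) (R := K)).compLinearMap
      (LinearMap.pi ![e, d])
  let F : ↥(⋀[K]^2 A) ⊗[K] B →ₗ[K] K :=
    LinearMap.mul' K K ∘ₗ TensorProduct.map (exteriorPower.alternatingMapLinearEquiv f) g
  have hF : ∀ a a' b, F (wedge2 K A a a' ⊗ₜ b) = (e a * d a' - d a * e a') * g b := by
    intro a a' b
    have h1 : exteriorPower.alternatingMapLinearEquiv f (wedge2 K A a a') = f ![a, a'] :=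
      exteriorPower.alternatingMapLinearEquiv_apply_ιMulti f ![a, a']
    have h2 : f ![a, a'] = e a * d a' - d a * e a' := by
      change Matrix.det (Matrix.of (fun i => LinearMap.pi ![e, d] (![a, a'] i))) = _
      rw [Matrix.det_fin_two]
      simp
    simp [F, h1, h2]
  by_contra hn
  rw [not_nontrivial_iff_subsingleton] at hn
  replace hn := (Submodule.Quotient.subsingleton_iff (R := K) (M := ↥(⋀[K]^2 A) ⊗[K] B)).mp hn
  have hle : w2Hol K A B ≤ LinearMap.ker F := by
    refine Submodule.span_le.mpr ?_
    rintro x ⟨a, a', b, rfl⟩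
    rw [SetLike.mem_coe, LinearMap.mem_ker, map_sub, hF, hF, he, he, hd, hd, hg]
    linear_combination (-(e a * d a' - d a * e a') * g b) * h
  have hm : wedge2 K A a a' ⊗ₜ[K] b ∈ w2Hol K A B := by rw [hn]; trivial
  have := hle hm
  rw [LinearMap.mem_ker, hF] at this
  exact hne this

end helpers

lemma xop_iter (z : ℂ) (I : Ideal (LaurentPolynomial ℂ)) (k : ℕ) (f : LaurentPolynomial ℂ) :
    (xop ℂ z)^[k] (Ideal.Quotient.mk I f) = Ideal.Quotient.mk I ((T 1 - C z) ^ k * f) := by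
  induction k with
  | zero => simp
  | succ k ih =>
    rw [Function.iterate_succ_apply', ih, pow_succ', mul_assoc, sub_mul, map_sub]
    unfold xop
    congr 1
    rw [← LaurentPolynomial.smul_eq_C_mul]
    rfl

lemma xop_nilp (z : ℂ) (m : ℕ) (a : LQuot ℂ ((T 1 - C z) ^ m)) : (xop ℂ z)^[m] a = 0 := by
  obtain ⟨f, rfl⟩ := Ideal.Quotient.mk_surjective a
  rw [xop_iter, Ideal.Quotient.eq_zero_iff_mem]
  exact Ideal.mul_mem_right _ _ (Ideal.mem_span_singleton_self _)

lemma one_dim (z : ℂ) (hz : z ≠ 0) (a : LQuot ℂ ((T 1 - C z) ^ 1)) :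
    ∃ c : ℂ, a = c • 1 := by
  obtain ⟨f, rfl⟩ := Ideal.Quotient.mk_surjective a
  set q := Ideal.Quotient.mk (Ideal.span {((T 1 - C z) ^ 1 : LaurentPolynomial ℂ)}) with hq
  have hC : ∀ c, q (C c) = c • 1 := by
    intro c
    rw [← mul_one (C c), ← LaurentPolynomial.smul_eq_C_mul]; rfl
  have hT : q (T 1) = q (C z) := by
    rw [hq, Ideal.Quotient.eq]
    simpa using Ideal.mem_span_singleton_self (T 1 - C z : LaurentPolynomial ℂ)
  have hinv : q (T (-1)) = q (C z⁻¹) := by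
    have h1 : q (T (-1)) * q (T 1) = 1 := by
      rw [← map_mul, ← T_add]; simp
    have h2 : q (C z) * q (C z⁻¹) = 1 := by
      rw [← map_mul, ← map_mul, mul_inv_cancel₀ hz]; simp
    calc q (T (-1)) = q (T (-1)) * (q (C z) * q (C z⁻¹)) := by rw [h2, mul_one]
      _ = q (T (-1)) * q (T 1) * q (C z⁻¹) := by rw [hT]; ring
      _ = _ := by rw [h1, one_mul]
  suffices h : ∃ c, q f = q (C c) by
    obtain ⟨c, hc⟩ := h
    exact ⟨c, hc.trans (hC c)⟩
  induction f using LaurentPolynomial.induction_on with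
  | h_C a => exact ⟨a, rfl⟩
  | h_add h1 h2 =>
    obtain ⟨c, hc⟩ := h1
    obtain ⟨d, hd⟩ := h2
    exact ⟨c + d, by rw [map_add, map_add, map_add, hc, hd]⟩
  | h_C_mul_T n a h =>
    obtain ⟨c, hc⟩ := h
    exact ⟨c * z, by rw [T_add, ← mul_assoc, map_mul, hc, hT, map_mul, map_mul]⟩
  | h_C_mul_T_Z n a h =>
    obtain ⟨c, hc⟩ := h
    exact ⟨c * z⁻¹, by rw [sub_eq_add_neg (-(n : ℤ)), T_add, ← mul_assoc, map_mul, hc, hinv, map_mul, map_mul]⟩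

/-- evaluation in a quotient -/
lemma exists_eval (R : Type) [CommRing R] [Algebra ℂ R] (u : Rˣ) (z : ℂ) (m : ℕ)
    (h : ((u : R) - algebraMap ℂ R z) ^ m = 0) :
    ∃ φ : LQuot ℂ ((T 1 - C z) ^ m) →ₗ[ℂ] R, φ 1 = 1 ∧
      ∀ a, φ ((T 1 : LaurentPolynomial ℂ) • a) = u * φ a := by
  let ψ : LaurentPolynomial ℂ →+* R := LaurentPolynomial.eval₂ (algebraMap ℂ R) u
  let φ : LQuot ℂ ((T 1 - C z) ^ m) →+* R := Ideal.Quotient.lift _ ψ (by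
    intro a ha
    rw [Ideal.mem_span_singleton] at ha
    obtain ⟨b, rfl⟩ := ha
    rw [map_mul, map_pow, map_sub]
    simp [ψ, h])
  refine ⟨{ toFun := φ, map_add' := map_add φ, map_smul' := ?_ }, map_one φ, ?_⟩
  · intro c a
    obtain ⟨f, rfl⟩ := Ideal.Quotient.mk_surjective a
    change ψ (c • f) = c • ψ f
    rw [LaurentPolynomial.smul_eq_C_mul, map_mul, Algebra.smul_def]
    simp [ψ]
  · intro a
    obtain ⟨f, rfl⟩ := Ideal.Quotient.mk_surjective a
    change ψ (T 1 * f) = u * ψ f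
    rw [map_mul]
    simp [ψ]

theorem stmt6 (z w : ℂ) (hz : z ≠ 0) (hw : w ≠ 0) (m n : ℕ) (hm : 1 ≤ m) (hn : 1 ≤ n) :
    Nontrivial (w2Quot ℂ (LQuot ℂ ((T 1 - C z) ^ m)) (LQuot ℂ ((T 1 - C w) ^ n))) ↔
      z ^ 2 * w = 1 ∧ 2 ≤ m := by
  constructor
  · intro hnt
    by_contra hcon
    refine not_subsingleton_iff_nontrivial.mpr hnt (subsingleton_of_clsF ?_)
    intro a a' b
    by_cases h : z ^ 2 * w = 1
    · have hm1 : m = 1 := by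
        by_contra h1
        exact hcon ⟨h, by omega⟩
      subst hm1
      obtain ⟨c, rfl⟩ := one_dim z hz a
      obtain ⟨c', rfl⟩ := one_dim z hz a'
      unfold clsF
      rw [wedge2_smul_left, wedge2_smul_right, wedge2_self, smul_zero, smul_zero,
        TensorProduct.zero_tmul, map_zero]
    · exact clsF_zero_of_nilp z w m n (xop_nilp z m) (xop_nilp w n) h a a' b
  · rintro ⟨h, hm2⟩
    obtain ⟨g, hg1, hg⟩ := exists_eval ℂ (Units.mk0 w hw) w n (by simp; omega)
    let u : (DualNumber ℂ)ˣ :=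
      { val := TrivSqZeroExt.inl z + TrivSqZeroExt.inr 1
        inv := TrivSqZeroExt.inl z⁻¹ - TrivSqZeroExt.inr (z⁻¹ * z⁻¹)
        val_inv := by
          ext <;> simp [hz]
          try field_simp
          try ring
        inv_val := by
          ext <;> simp [hz]
          try field_simp
          try ring }
    obtain ⟨φ, hφ1, hφ⟩ := exists_eval (DualNumber ℂ) u z m (by
      have : (u : DualNumber ℂ) - algebraMap ℂ _ z = DualNumber.eps := by
        ext <;> simp [u, TrivSqZeroExt.algebraMap_eq_inl]
      rw [this]
      exact pow_eq_zero_of_le hm2 (by rw [pow_two, DualNumber.eps_mul_eps]))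
    have hf : ∀ a, (φ ((T 1 : LaurentPolynomial ℂ) • a)).fst = z * (φ a).fst := by
      intro a; rw [hφ]; simp [u]
    have hs : ∀ a, (φ ((T 1 : LaurentPolynomial ℂ) • a)).snd = (φ a).fst + z * (φ a).snd := by
      intro a; rw [hφ]; simp [u, add_comm]
    refine nontrivial_of_func z w h
      ({ toFun := fun a => (φ a).fst, map_add' := by simp, map_smul' := by simp })
      ({ toFun := fun a => (φ a).snd, map_add' := by simp, map_smul' := by simp })
      g hf hs (by simpa using hg) 1 ((T 1 : LaurentPolynomial ℂ) • 1) 1 ?_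
    simp only [LinearMap.coe_mk, AddHom.coe_mk, hf, hs, hφ1, hg1]
    simp
end
end

section
/- Let z, w be nonzero complex numbers with z²w = 1 and let m ≥ n ≥ 1 be integers. Set A = ℂ[t^{±1}]/((t − z)^m) and B = ℂ[t^{±1}]/((t − w)^n), and let W be the quotient of (Λ²_ℂ A) ⊗_ℂ B by the ℂ-subspace spanned by all elements (α∧α')⊗β − (tα∧tα')⊗tβ with α, α' ∈ A and β ∈ B. Then the complex dimension of W is at most n(m − 1). -/
open LaurentPolynomial TensorProduct

set_option synthInstance.maxHeartbeats 1000000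
set_option maxHeartbeats 1000000
noncomputable section

section helpers
variable {K : Type} [Field K]

theorem upd0 {M : Type} (a c x : M) : Function.update ![a, c] 0 x = ![x, c] := by
  ext i; fin_cases i <;> rfl

theorem upd1 {M : Type} (a c x : M) : Function.update ![a, c] 1 x = ![a, x] := by
  ext i; fin_cases i <;> rfl

theorem wedge2_add_left' {M : Type} [AddCommGroup M] [Module K M] (a b c : M) :
    wedge2 K M (a + b) c = wedge2 K M a c + wedge2 K M b c := by
  have := (exteriorPower.ιMulti K 2 (M := M)).map_update_add ![a, c] 0 a b
  simp only [upd0, upd1] at this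
  exact this

theorem wedge2_smul_left' {M : Type} [AddCommGroup M] [Module K M] (r : K) (a c : M) :
    wedge2 K M (r • a) c = r • wedge2 K M a c := by
  have := (exteriorPower.ιMulti K 2 (M := M)).map_update_smul ![a, c] 0 r a
  simp only [upd0, upd1] at this
  exact this

theorem wedge2_add_right' {M : Type} [AddCommGroup M] [Module K M] (c a b : M) :
    wedge2 K M c (a + b) = wedge2 K M c a + wedge2 K M c b := by
  have := (exteriorPower.ιMulti K 2 (M := M)).map_update_add ![c, a] 1 a b
  simp only [upd0, upd1] at this
  exact this

theorem wedge2_smul_right' {M : Type} [AddCommGroup M] [Module K M] (r : K) (c a : M) :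
    wedge2 K M c (r • a) = r • wedge2 K M c a := by
  have := (exteriorPower.ιMulti K 2 (M := M)).map_update_smul ![c, a] 1 r a
  simp only [upd0, upd1] at this
  exact this

theorem wedge2_self' {M : Type} [AddCommGroup M] [Module K M] (a : M) :
    wedge2 K M a a = 0 :=
  (exteriorPower.ιMulti K 2 (M := M)).map_eq_zero_of_eq ![a, a] (i := 0) (j := 1) rfl (by simp)

theorem span_pow_top {M : Type} [AddCommGroup M] [Module (LaurentPolynomial K) M] [Module K M]
    [IsScalarTower K (LaurentPolynomial K) M] (z : K) (m : ℕ) (g : M)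
    (hg : ∀ x : M, ∃ p : LaurentPolynomial K, x = p • g)
    (h0 : ((T 1 - C z : LaurentPolynomial K) ^ m) • g = 0) (hm : 1 ≤ m) :
    Submodule.span K (Set.range fun j : Fin m => ((T 1 - C z : LaurentPolynomial K) ^ (j : ℕ)) • g)
      = ⊤ := by
  set S := Submodule.span K
    (Set.range fun j : Fin m => ((T 1 - C z : LaurentPolynomial K) ^ (j : ℕ)) • g) with hS
  let f : M →ₗ[K] M := LinearMap.restrictScalars K (LinearMap.lsmul (LaurentPolynomial K) M (T 1))
  have hf : ∀ x, f x = (T 1 : LaurentPolynomial K) • x := fun x => rfl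
  have hinv : ∀ x : M, (T (-1) : LaurentPolynomial K) • (T 1 : LaurentPolynomial K) • x = x := by
    intro x
    rw [← mul_smul, ← T_add]; simp
  have hinj : Function.Injective f := fun x y hxy => by
    rw [← hinv x, ← hinv y, ← hf, ← hf, hxy]
  have hmem : ∀ j : ℕ, ((T 1 - C z : LaurentPolynomial K) ^ j) • g ∈ S := by
    intro j
    by_cases hj : j < m
    · exact Submodule.subset_span ⟨⟨j, hj⟩, rfl⟩
    · obtain ⟨d, rfl⟩ := Nat.exists_eq_add_of_le (not_lt.mp hj)
      rw [add_comm, pow_add, mul_smul, h0, smul_zero]; exact S.zero_mem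
  have hCz : ∀ x : M, (C z : LaurentPolynomial K) • x = z • x := by
    intro x
    rw [← algebraMap_smul (LaurentPolynomial K) z x]; rfl
  have hle : S.map f ≤ S := by
    rw [hS, Submodule.map_span_le]
    rintro _ ⟨j, rfl⟩
    have : f (((T 1 - C z : LaurentPolynomial K) ^ (j : ℕ)) • g)
        = ((T 1 - C z : LaurentPolynomial K) ^ ((j : ℕ) + 1)) • g
          + z • (((T 1 - C z : LaurentPolynomial K) ^ (j : ℕ)) • g) := by
      rw [hf, ← hCz, pow_succ', mul_smul, ← add_smul, sub_add_cancel]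
    simp only
    rw [this]
    exact S.add_mem (hmem _) (S.smul_mem _ (hmem _))
  have : FiniteDimensional K S := FiniteDimensional.span_of_finite K (Set.finite_range _)
  have heq : S.map f = S := Submodule.eq_of_le_of_finrank_eq hle
    (LinearEquiv.finrank_eq (Submodule.equivMapOfInjective f hinj S)).symm
  have hT : ∀ i : ℤ, (T i : LaurentPolynomial K) • g ∈ S := by
    intro i
    induction i using Int.induction_on with
    | zero => have := hmem 0; simpa using this
    | succ i ih =>
      rw [add_comm, T_add, mul_smul]
      exact hle ⟨_, ih, rfl⟩
    | pred i ih =>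
      rw [← heq] at ih
      obtain ⟨y, hy, hyx⟩ := ih
      rw [sub_eq_add_neg, add_comm, T_add, mul_smul, ← hyx, hf, hinv]
      exact hy
  rw [eq_top_iff]
  intro x _
  obtain ⟨p, rfl⟩ := hg x
  induction p using LaurentPolynomial.induction_on' with
  | add p q hp hq => rw [add_smul]; exact S.add_mem (hp trivial) (hq trivial)
  | C_mul_T i a =>
    have : (C a : LaurentPolynomial K) = algebraMap K _ a := rfl
    rw [mul_smul, this, algebraMap_smul]
    exact S.smul_mem _ (hT i)

theorem mem_of_sub_mem {V : Type} [AddCommGroup V] [Module K V] (N : Submodule K V) {x y : V}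
    (h : x - y ∈ N) (hx : x ∈ N) : y ∈ N := by
  simpa using N.sub_mem hx h

theorem rank_quot_le {V : Type} [AddCommGroup V] [Module K V] (N : Submodule K V) {ι : Type}
    (F : ι → V) (h : Submodule.span K (Set.range F) ⊔ N = ⊤) :
    Module.rank K (V ⧸ N) ≤ Cardinal.mk ι := by
  have h2 : Submodule.span K (Set.range (N.mkQ ∘ F)) = ⊤ := by
    have := congrArg (Submodule.map N.mkQ) h
    rw [Submodule.map_sup, Submodule.map_span, Submodule.map_top, Submodule.range_mkQ,
      Submodule.mkQ_map_self, sup_bot_eq, ← Set.range_comp] at this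
    exact this
  calc Module.rank K (V ⧸ N) = Module.rank K (⊤ : Submodule K (V ⧸ N)) := by rw [rank_top]
    _ ≤ Cardinal.mk (Set.range (N.mkQ ∘ F)) := by rw [← h2]; exact rank_span_le _
    _ ≤ Cardinal.mk ι := Cardinal.mk_range_le

theorem rank_w2 {A B : Type} [AddCommGroup A] [AddCommGroup B]
    [Module (LaurentPolynomial K) A] [Module (LaurentPolynomial K) B]
    [Module K A] [Module K B]
    [IsScalarTower K (LaurentPolynomial K) A] [IsScalarTower K (LaurentPolynomial K) B]
    (k n : ℕ) (u : Fin (k + 1) → A) (v : Fin n → B)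
    (hu : Submodule.span K (Set.range u) = ⊤) (hv : Submodule.span K (Set.range v) = ⊤)
    (hg : ∀ x : A, ∃ p : LaurentPolynomial K, x = p • u 0) :
    Module.rank K (w2Quot K A B) ≤ (n * k : ℕ) := by
  let F : Fin n × Fin k → ↥(⋀[K]^2 A) ⊗[K] B := fun ij =>
    (wedge2 K A (u 0) (u ij.2.succ)) ⊗ₜ[K] v ij.1
  let S : Submodule K (↥(⋀[K]^2 A) ⊗[K] B) := Submodule.span K (Set.range F) ⊔ w2Hol K A B
  have hrel : ∀ (a a' : A) (b : B), (wedge2 K A a a') ⊗ₜ[K] b ∈ S ↔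
      (wedge2 K A ((T 1 : LaurentPolynomial K) • a) ((T 1 : LaurentPolynomial K) • a')) ⊗ₜ[K]
        ((T 1 : LaurentPolynomial K) • b) ∈ S := by
    intro a a' b
    have h : (wedge2 K A a a') ⊗ₜ[K] b -
      (wedge2 K A ((T 1 : LaurentPolynomial K) • a) ((T 1 : LaurentPolynomial K) • a')) ⊗ₜ[K]
        ((T 1 : LaurentPolynomial K) • b) ∈ S :=
      (le_sup_right : w2Hol K A B ≤ S) (Submodule.subset_span ⟨a, a', b, rfl⟩)
    exact ⟨fun h1 => by have := mem_of_sub_mem (V := ↥(⋀[K]^2 A) ⊗[K] B) S h h1; exact this, fun h1 => by simpa using S.add_mem h h1⟩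
  have h1 : ∀ (a' : A) (b : B), ((wedge2 K A (u 0) a') ⊗ₜ[K] b) ∈ S := by
    intro a' b
    have ha : a' ∈ Submodule.span K (Set.range u) := hu ▸ Submodule.mem_top
    have hb : b ∈ Submodule.span K (Set.range v) := hv ▸ Submodule.mem_top
    induction ha using Submodule.span_induction with
    | zero =>
      have : wedge2 K A (u 0) 0 = 0 := by
        simpa using wedge2_smul_right' (K := K) 0 (u 0) 0
      rw [this, zero_tmul]; exact S.zero_mem
    | add x y _ _ hx hy =>
      rw [wedge2_add_right', add_tmul]; exact S.add_mem hx hy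
    | smul r x _ hx =>
      rw [wedge2_smul_right', ← smul_tmul']; exact S.smul_mem _ hx
    | mem x hx =>
      obtain ⟨j, rfl⟩ := hx
      induction hb using Submodule.span_induction with
      | zero => rw [tmul_zero]; exact S.zero_mem
      | add x y _ _ hx hy => rw [tmul_add]; exact S.add_mem hx hy
      | smul r x _ hx => rw [tmul_smul]; exact S.smul_mem _ hx
      | mem x hx =>
        obtain ⟨i, rfl⟩ := hx
        refine Fin.cases ?_ (fun j => ?_) j
        · rw [wedge2_self', zero_tmul]; exact S.zero_mem
        · exact (le_sup_left : Submodule.span K (Set.range F) ≤ S) (Submodule.subset_span ⟨(i, j), rfl⟩)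
  have inv1 : ∀ {M : Type} [AddCommGroup M] [Module (LaurentPolynomial K) M] (x : M),
      (T (-1) : LaurentPolynomial K) • (T 1 : LaurentPolynomial K) • x = x := by
    intro M _ _ x
    rw [← mul_smul, ← T_add]; simp
  have inv2 : ∀ {M : Type} [AddCommGroup M] [Module (LaurentPolynomial K) M] (x : M),
      (T 1 : LaurentPolynomial K) • (T (-1) : LaurentPolynomial K) • x = x := by
    intro M _ _ x
    rw [← mul_smul, ← T_add]; simp
  have hT : ∀ (i : ℤ) (a' : A) (b : B),
      ((wedge2 K A ((T i : LaurentPolynomial K) • u 0) a') ⊗ₜ[K] b) ∈ S := by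
    intro i
    induction i using Int.induction_on with
    | zero => intro a' b; simpa using h1 a' b
    | succ i ih =>
      intro a' b
      have := ih ((T (-1) : LaurentPolynomial K) • a') ((T (-1) : LaurentPolynomial K) • b)
      rw [hrel, inv2, inv2, ← mul_smul, ← T_add, add_comm] at this
      exact this
    | pred i ih =>
      intro a' b
      rw [hrel, ← mul_smul, ← T_add, add_sub_cancel]
      exact ih _ _
  have hall : ∀ (a a' : A) (b : B), ((wedge2 K A a a') ⊗ₜ[K] b) ∈ S := by
    intro a a' b
    obtain ⟨p, rfl⟩ := hg a
    induction p using LaurentPolynomial.induction_on' with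
    | add p q hp hq =>
      rw [add_smul, wedge2_add_left', add_tmul]; exact S.add_mem hp hq
    | C_mul_T i r =>
      have : (C r : LaurentPolynomial K) = algebraMap K _ r := rfl
      rw [mul_smul, this, algebraMap_smul, wedge2_smul_left', ← smul_tmul']
      exact S.smul_mem _ (hT i a' b)
  have htop : S = ⊤ := by
    rw [eq_top_iff]
    intro x hxt
    clear hxt
    induction x using TensorProduct.induction_on with
    | zero => exact S.zero_mem
    | add x y hx hy => exact S.add_mem hx hy
    | tmul x b =>
      have hx : x ∈ Submodule.span K (Set.range (exteriorPower.ιMulti K 2 (M := A))) := by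
        rw [exteriorPower.ιMulti_span]; trivial
      induction hx using Submodule.span_induction with
      | zero => rw [zero_tmul]; exact S.zero_mem
      | add x y _ _ hx hy => rw [add_tmul]; exact S.add_mem hx hy
      | smul r x _ hx => rw [← smul_tmul']; exact S.smul_mem _ hx
      | mem x hx =>
        obtain ⟨c, rfl⟩ := hx
        have : c = ![c 0, c 1] := by ext i; fin_cases i <;> rfl
        rw [this]
        exact hall (c 0) (c 1) b
  have := rank_quot_le (w2Hol K A B) F htop
  simpa using this

theorem lquot_gen (p : LaurentPolynomial K) (x : LQuot K p) :
    ∃ r : LaurentPolynomial K, x = r • (1 : LQuot K p) := by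
  obtain ⟨r, rfl⟩ := Ideal.Quotient.mk_surjective x
  refine ⟨r, ?_⟩
  change _ = Ideal.Quotient.mk (Ideal.span {p}) (r * 1)
  rw [mul_one]

theorem lquot_zero (p : LaurentPolynomial K) : p • (1 : LQuot K p) = 0 := by
  change Ideal.Quotient.mk (Ideal.span {p}) (p * 1) = 0
  rw [mul_one]
  exact Ideal.Quotient.eq_zero_iff_mem.2 (Ideal.mem_span_singleton_self p)

end helpers

theorem stmt7 (z w : ℂ) (hz : z ≠ 0) (hw : w ≠ 0) (hzw : z ^ 2 * w = 1)
    (m n : ℕ) (hn : 1 ≤ n) (hnm : n ≤ m) :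
    Module.rank ℂ (w2Quot ℂ (LQuot ℂ ((T 1 - C z) ^ m)) (LQuot ℂ ((T 1 - C w) ^ n))) ≤
      (n * (m - 1) : ℕ) := by
  obtain ⟨k, rfl⟩ : ∃ k, m = k + 1 := ⟨m - 1, by omega⟩
  refine rank_w2 k n (fun j => ((T 1 - C z : LaurentPolynomial ℂ) ^ (j : ℕ)) • 1)
    (fun j => ((T 1 - C w : LaurentPolynomial ℂ) ^ (j : ℕ)) • 1) ?_ ?_ ?_
  · exact span_pow_top z (k + 1) 1 (lquot_gen _) (lquot_zero _) (by omega)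
  · exact span_pow_top w n 1 (lquot_gen _) (lquot_zero _) hn
  · intro x
    simpa using lquot_gen _ x
end
end
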